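/- arXiv:2207.10706 — 5 statements merged into one kernel-verified Lean document; each statement's English description precedes it below -/
import Mathlib

section
/- For every natural number n ≥ 2 there exists a function θ_n ∈ 𝒮(ℝ₊) such that: (1) the support of θ_n equals [1/n, n+1]; (2) θ_n(x) = 1 for every x ∈ [2/n, n]; and (3) |θ_n^{(β)}(x)| ≤ n^β · 2^{β(β+1)/2} for every x > 0 and every β ∈ ℕ, β ≥ 1. -/
/-!
The cutoff is assembled from the Fabius function, the distribution function `φ` of
`∑ 2⁻ᵏ Uₖ` with `Uₖ` independent and uniform on `[0, 1]`. It is the transition function (`0` on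
`(-∞, 0]`, `1` on `[1, ∞)`) with `φ x = ∫_{2x-1}^{2x} φ`, and here it is obtained as a Banach fixed
point: on continuous transition functions with `f x + f (1 - x) = 1` the averaging operator is a
`1/2`-contraction, since the difference `h` of two of them lives on `[0, 1]` and has integral zero
(`abs_window_integral_le`).

Differentiating the fixed point equation gives `φ' x = 2 (φ (2x) - φ (2x - 1))`, hence
`φ⁽ᵏ⁺¹⁾ x = 2ᵏ⁺¹ (φ⁽ᵏ⁾ (2x) - φ⁽ᵏ⁾ (2x - 1))`. For `k ≥ 1` the function `φ⁽ᵏ⁾` vanishes outside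
`(0, 1)`, so at most one of the two terms is nonzero and `|φ⁽ᵏ⁾| ≤ 2 ^ (k (k + 1) / 2)` follows by
induction (`abs_fabiusDeriv_le`). The function `θ x = φ (n x - 1) - φ (x - n)` then has all the
required properties, its two terms again having derivatives with disjoint supports.
-/

open MeasureTheory Set Filter

/-- The Schwartz class `𝒮(ℝ₊)`: smooth functions on `(0,∞)` such that
`x^α f^(β)(x)` is bounded on `(0,∞)` for every `α ∈ ℤ`, `β ∈ ℕ`. -/
def MellinSchwartz (f : ℝ → ℝ) : Prop :=
  ContDiffOn ℝ (⊤ : ℕ∞) f (Set.Ioi 0) ∧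
  ∀ (α : ℤ) (β : ℕ), ∃ M : ℝ, ∀ x ∈ Set.Ioi (0:ℝ),
    |x ^ α * iteratedDerivWithin β f (Set.Ioi 0) x| ≤ M

/-- The seminorm `p_{α,β}(f) = sup_{x>0} |x^α f^(β)(x)|`. -/
noncomputable def pSemi (α : ℤ) (β : ℕ) (f : ℝ → ℝ) : ℝ :=
  ⨆ x : Set.Ioi (0:ℝ), |(x:ℝ) ^ α * iteratedDerivWithin β f (Set.Ioi 0) (x:ℝ)|

/-- The Mellin convolution `f⋆g(x) = ∫₀^∞ y⁻¹ f(x y⁻¹) g(y) dy`. -/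
noncomputable def mconv (f g : ℝ → ℝ) : ℝ → ℝ :=
  fun x => ∫ y in Set.Ioi (0:ℝ), y⁻¹ * f (x * y⁻¹) * g y

open scoped BoundedContinuousFunction

/-! ### Construction of the Fabius function -/

/-- Continuous nondecreasing transition functions from `0` to `1` on `[0, 1]`, symmetric about the
point `(1/2, 1/2)`. -/
def transitionSet : Set (ℝ →ᵇ ℝ) :=
  {f | (∀ x ≤ 0, f x = 0) ∧ (∀ x, f x + f (1 - x) = 1) ∧ Monotone f}

lemma transitionSet_eq_one {f : ℝ →ᵇ ℝ} (hf : f ∈ transitionSet) {x : ℝ} (hx : 1 ≤ x) :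
    f x = 1 := by
  have h1 := hf.2.1 x
  rw [hf.1 (1 - x) (by linarith)] at h1
  linarith

lemma isClosed_transitionSet : IsClosed transitionSet := by
  have hc : ∀ x : ℝ, Continuous (fun f : ℝ →ᵇ ℝ => f x) := fun x =>
    (BoundedContinuousFunction.lipschitz_eval_const x).continuous
  have h : transitionSet = (⋂ x : ℝ, ⋂ _ : x ≤ 0, {f : ℝ →ᵇ ℝ | f x = 0}) ∩
      ((⋂ x : ℝ, {f : ℝ →ᵇ ℝ | f x + f (1 - x) = 1}) ∩
        (⋂ x : ℝ, ⋂ y : ℝ, ⋂ _ : x ≤ y, {f : ℝ →ᵇ ℝ | f x ≤ f y})) := by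
    ext f
    simp [transitionSet, Monotone]
  rw [h]
  refine IsClosed.inter ?_ (IsClosed.inter ?_ ?_)
  · exact isClosed_iInter fun x => isClosed_iInter fun _ => isClosed_eq (hc x) continuous_const
  · exact isClosed_iInter fun x => isClosed_eq ((hc x).add (hc _)) continuous_const
  · exact isClosed_iInter fun x => isClosed_iInter fun y => isClosed_iInter fun _ =>
      isClosed_le (hc x) (hc y)

lemma transitionSet_nonempty : transitionSet.Nonempty := by
  have hb : ∀ x : ℝ, ‖max 0 (min x 1)‖ ≤ 1 := by
    intro x
    rw [Real.norm_eq_abs, abs_le]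
    constructor
    · linarith [le_max_left 0 (min x 1)]
    · exact max_le zero_le_one (min_le_right _ _)
  refine ⟨BoundedContinuousFunction.ofNormedAddCommGroup (fun x : ℝ => max 0 (min x 1))
    (by fun_prop) 1 hb, ?_, ?_, ?_⟩
  · intro x hx
    change max 0 (min x 1) = 0
    rw [min_eq_left (by linarith), max_eq_left hx]
  · intro x
    change max 0 (min x 1) + max 0 (min (1 - x) 1) = 1
    grind
  · intro x y hxy
    change max 0 (min x 1) ≤ max 0 (min y 1)
    gcongr

/-- The averaging operator `f ↦ ∫_{2x-1}^{2x} f`, written as an integral over a fixed interval. -/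
noncomputable def averaging (f : ℝ →ᵇ ℝ) : ℝ →ᵇ ℝ :=
  BoundedContinuousFunction.ofNormedAddCommGroup (fun x : ℝ => ∫ u in (0:ℝ)..1, f (2 * x - 1 + u))
    (intervalIntegral.continuous_parametric_intervalIntegral_of_continuous' (by fun_prop) 0 1)
    ‖f‖ (by
      intro x
      have := intervalIntegral.norm_integral_le_of_norm_le_const (a := (0:ℝ)) (b := 1)
        (f := fun u => f (2 * x - 1 + u)) (C := ‖f‖) (fun u _ => f.norm_coe_le_norm _)
      simpa using this)

lemma averaging_apply (f : ℝ →ᵇ ℝ) (x : ℝ) :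
    averaging f x = ∫ u in (0:ℝ)..1, f (2 * x - 1 + u) := rfl

lemma averaging_apply' (f : ℝ →ᵇ ℝ) (x : ℝ) :
    averaging f x = ∫ u in (2 * x - 1)..(2 * x), f u := by
  rw [averaging_apply, intervalIntegral.integral_comp_add_left (fun u => f u)]
  congr 1 <;> ring

lemma averaging_mapsTo : MapsTo averaging transitionSet transitionSet := by
  intro f hf
  refine ⟨?_, ?_, ?_⟩
  · intro x hx
    rw [averaging_apply', intervalIntegral.integral_congr (g := fun _ => (0:ℝ))]
    · simp
    · intro u hu
      rw [uIcc_of_le (by linarith)] at hu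
      exact hf.1 u (by linarith [hu.2])
  · intro x
    rw [averaging_apply', averaging_apply']
    have h1 : ∫ u in (2 * (1 - x) - 1)..(2 * (1 - x)), f u
        = ∫ u in (2 * x - 1)..(2 * x), f (1 - u) := by
      rw [intervalIntegral.integral_comp_sub_left (fun u => f u)]
      congr 1 <;> ring
    rw [h1, ← intervalIntegral.integral_add (Continuous.intervalIntegrable (by fun_prop) _ _)
      (Continuous.intervalIntegrable (by fun_prop) _ _)]
    simp [hf.2.1]
  · intro x y hxy
    rw [averaging_apply, averaging_apply]
    apply intervalIntegral.integral_mono_on zero_le_one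
      (Continuous.intervalIntegrable (by fun_prop) _ _)
      (Continuous.intervalIntegrable (by fun_prop) _ _)
    intro u _
    exact hf.2.2 (by linarith)

/-- The contraction estimate: the primitive of `h` vanishes outside `(0, 1)` and is at most `D / 2`
inside, because it can be computed from either endpoint. -/
lemma abs_window_integral_le {h : ℝ → ℝ} (hc : Continuous h) {D : ℝ} (hD : ∀ x, |h x| ≤ D)
    (h0 : ∀ x ≤ 0, h x = 0) (hsymm : ∀ x, h (1 - x) = -h x) (y : ℝ) :
    |∫ u in (y - 1)..y, h u| ≤ D / 2 := by
  have hD0 : 0 ≤ D := (abs_nonneg _).trans (hD 0)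
  have hi : ∀ a b : ℝ, IntervalIntegrable h volume a b := fun a b => hc.intervalIntegrable a b
  have h1 : ∀ x, 1 ≤ x → h x = 0 := by
    intro x hx
    have := hsymm x
    rw [h0 (1 - x) (by linarith)] at this
    linarith
  have hint : ∫ u in (0:ℝ)..1, h u = 0 := by
    have e : ∫ u in (0:ℝ)..1, h (1 - u) = ∫ u in (0:ℝ)..1, h u := by
      rw [intervalIntegral.integral_comp_sub_left (fun u => h u)]
      simp
    simp only [hsymm, intervalIntegral.integral_neg] at e
    linarith
  have hle : ∀ a b : ℝ, |∫ u in a..b, h u| ≤ D * |b - a| := by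
    intro a b
    rw [← Real.norm_eq_abs]
    exact intervalIntegral.norm_integral_le_of_norm_le_const (fun u _ => hD u)
  have hG0 : ∀ a ≤ 0, ∫ u in (0:ℝ)..a, h u = 0 := by
    intro a ha
    rw [intervalIntegral.integral_congr (g := fun _ => (0:ℝ))]
    · simp
    · intro u hu
      rw [uIcc_of_ge ha] at hu
      exact h0 u hu.2
  have hG1 : ∀ a, ∫ u in (0:ℝ)..a, h u = ∫ u in (1:ℝ)..a, h u := by
    intro a
    rw [← intervalIntegral.integral_add_adjacent_intervals (hi 0 1) (hi 1 a), hint, zero_add]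
  have hG1' : ∀ a, 1 ≤ a → ∫ u in (0:ℝ)..a, h u = 0 := by
    intro a ha
    rw [hG1, intervalIntegral.integral_congr (g := fun _ => (0:ℝ))]
    · simp
    · intro u hu
      rw [uIcc_of_le ha] at hu
      exact h1 u hu.1
  have hG : ∀ a, |∫ u in (0:ℝ)..a, h u| ≤ D / 2 := by
    intro a
    rcases le_total a 0 with ha | ha
    · rw [hG0 a ha, abs_zero]; linarith
    rcases le_total 1 a with ha1 | ha1
    · rw [hG1' a ha1, abs_zero]; linarith
    rcases le_total a (1 / 2) with ha2 | ha2
    · refine (hle 0 a).trans ?_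
      rw [sub_zero, abs_of_nonneg ha]
      nlinarith
    · rw [hG1]
      refine (hle 1 a).trans ?_
      rw [abs_of_nonpos (by linarith)]
      nlinarith
  have hsplit : ∫ u in (y - 1)..y, h u
      = (∫ u in (0:ℝ)..y, h u) - ∫ u in (0:ℝ)..(y - 1), h u := by
    rw [intervalIntegral.integral_interval_sub_left (hi _ _) (hi _ _)]
  rw [hsplit]
  rcases le_total y 1 with hy | hy
  · rw [hG0 (y - 1) (by linarith), sub_zero]
    exact hG y
  · rw [hG1' y hy, zero_sub, abs_neg]
    exact hG _

lemma dist_averaging_le {f g : ℝ →ᵇ ℝ} (hf : f ∈ transitionSet) (hg : g ∈ transitionSet) :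
    dist (averaging f) (averaging g) ≤ dist f g / 2 := by
  rw [BoundedContinuousFunction.dist_le (by positivity)]
  intro x
  rw [averaging_apply', averaging_apply', Real.dist_eq,
    ← intervalIntegral.integral_sub (Continuous.intervalIntegrable (by fun_prop) _ _)
      (Continuous.intervalIntegrable (by fun_prop) _ _)]
  refine abs_window_integral_le (h := fun u => f u - g u) (by fun_prop) ?_ ?_ ?_ (2 * x)
  · intro u
    rw [← Real.dist_eq]
    exact BoundedContinuousFunction.dist_coe_le_dist u
  · intro u hu
    simp [hf.1 u hu, hg.1 u hu]
  · intro u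
    have h1 := hf.2.1 u
    have h2 := hg.2.1 u
    linarith

lemma exists_fabius : ∃ φ : ℝ →ᵇ ℝ, φ ∈ transitionSet ∧ averaging φ = φ := by
  obtain ⟨f₀, hf₀⟩ := transitionSet_nonempty
  have hcontr : ContractingWith (1 / 2) (averaging_mapsTo.restrict averaging _ _) := by
    refine ⟨by rw [div_lt_one] <;> norm_num, LipschitzWith.of_dist_le_mul ?_⟩
    rintro ⟨f, hf⟩ ⟨g, hg⟩
    have := dist_averaging_le hf hg
    simp only [Subtype.dist_eq, MapsTo.val_restrict_apply]
    push_cast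
    linarith
  obtain ⟨φ, hφ, hfix, -⟩ := hcontr.exists_fixedPoint' isClosed_transitionSet.isComplete
    averaging_mapsTo hf₀ (edist_ne_top _ _)
  exact ⟨φ, hφ, hfix⟩

/-! ### Derivatives of the Fabius function -/

/-- The candidate `k`-th derivative of a solution of `φ' x = 2 (φ (2x) - φ (2x - 1))`. -/
noncomputable def fabiusDeriv (φ : ℝ → ℝ) : ℕ → ℝ → ℝ
  | 0 => φ
  | k + 1 => fun x => 2 ^ (k + 1) * (fabiusDeriv φ k (2 * x) - fabiusDeriv φ k (2 * x - 1))

lemma fabius_hasDerivAt {φ : ℝ →ᵇ ℝ} (hfix : averaging φ = φ) (x : ℝ) :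
    HasDerivAt φ (2 * (φ (2 * x) - φ (2 * x - 1))) x := by
  have hc : Continuous φ := φ.continuous
  have hP : ∀ a, HasDerivAt (fun b => ∫ u in (0:ℝ)..b, φ u) (φ a) a := fun a =>
    hc.integral_hasStrictDerivAt 0 a |>.hasDerivAt
  have e : (φ : ℝ → ℝ) = fun x => (∫ u in (0:ℝ)..(2 * x), φ u) - ∫ u in (0:ℝ)..(2 * x - 1), φ u := by
    funext x
    rw [intervalIntegral.integral_interval_sub_left (hc.intervalIntegrable _ _)
      (hc.intervalIntegrable _ _), ← averaging_apply', hfix]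
  have l1 : HasDerivAt (fun x : ℝ => 2 * x) 2 x := by
    simpa using (hasDerivAt_id x).const_mul 2
  have h1 := (hP (2 * x)).comp x l1
  have h2 := (hP (2 * x - 1)).comp x (l1.sub_const 1)
  rw [mul_comm, sub_mul]
  exact (h1.sub h2).congr_of_eventuallyEq (Eventually.of_forall fun y => congrFun e y)

lemma fabiusDeriv_hasDerivAt {φ : ℝ →ᵇ ℝ} (hfix : averaging φ = φ) (k : ℕ) :
    ∀ x, HasDerivAt (fabiusDeriv φ k) (fabiusDeriv φ (k + 1) x) x := by
  induction k with
  | zero =>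
    intro x
    simpa [fabiusDeriv] using fabius_hasDerivAt hfix x
  | succ k ih =>
    intro x
    have l1 : HasDerivAt (fun x : ℝ => 2 * x) 2 x := by
      simpa using (hasDerivAt_id x).const_mul 2
    have h1 := (ih (2 * x)).comp x l1
    have h2 := (ih (2 * x - 1)).comp x (l1.sub_const 1)
    have h3 := (h1.sub h2).const_mul (2 ^ (k + 1) : ℝ)
    refine HasDerivAt.congr_deriv (f := fabiusDeriv φ (k + 1)) h3 ?_
    change _ = 2 ^ (k + 1 + 1) *
      (fabiusDeriv φ (k + 1) (2 * x) - fabiusDeriv φ (k + 1) (2 * x - 1))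
    ring

lemma fabiusDeriv_of_nonpos {φ : ℝ →ᵇ ℝ} (hφ : φ ∈ transitionSet) (k : ℕ) :
    ∀ x ≤ 0, fabiusDeriv φ k x = 0 := by
  induction k with
  | zero => exact hφ.1
  | succ k ih =>
    intro x hx
    rw [fabiusDeriv]
    simp only
    rw [ih _ (by linarith), ih _ (by linarith)]
    simp

lemma fabiusDeriv_of_one_le {φ : ℝ →ᵇ ℝ} (hφ : φ ∈ transitionSet) (k : ℕ) :
    ∀ x, 1 ≤ x → fabiusDeriv φ (k + 1) x = 0 := by
  induction k with
  | zero =>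
    intro x hx
    simp only [fabiusDeriv]
    rw [transitionSet_eq_one hφ (by linarith), transitionSet_eq_one hφ (by linarith)]
    simp
  | succ k ih =>
    intro x hx
    rw [fabiusDeriv]
    simp only
    rw [ih _ (by linarith), ih _ (by linarith)]
    simp

lemma fabius_nonneg {φ : ℝ →ᵇ ℝ} (hφ : φ ∈ transitionSet) (x : ℝ) : 0 ≤ φ x := by
  rw [← hφ.1 (min x 0) (min_le_right _ _)]
  exact hφ.2.2 (min_le_left _ _)

lemma fabius_le_one {φ : ℝ →ᵇ ℝ} (hφ : φ ∈ transitionSet) (x : ℝ) : φ x ≤ 1 := by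
  linarith [hφ.2.1 x, fabius_nonneg hφ (1 - x)]

/-- The two terms of the recursion are never nonzero together when `k ≥ 1`, so the constants
multiply as `2 · 2² ⋯ 2ᵏ` without any loss. -/
lemma abs_fabiusDeriv_le {φ : ℝ →ᵇ ℝ} (hφ : φ ∈ transitionSet) (k : ℕ) :
    ∀ x, |fabiusDeriv φ k x| ≤ 2 ^ (k * (k + 1) / 2) := by
  induction k with
  | zero =>
    intro x
    simp only [fabiusDeriv, zero_mul, Nat.zero_div, pow_zero]
    rw [abs_of_nonneg (fabius_nonneg hφ x)]
    exact fabius_le_one hφ x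
  | succ k ih =>
    intro x
    have he : (k + 1) * (k + 1 + 1) / 2 = (k + 1) + k * (k + 1) / 2 := by
      rw [show (k + 1) * (k + 1 + 1) = k * (k + 1) + (k + 1) * 2 by ring,
        Nat.add_mul_div_right _ _ (by norm_num)]
      ring
    rw [he, pow_add, fabiusDeriv]
    simp only
    rw [abs_mul, abs_of_pos (by positivity : (0:ℝ) < 2 ^ (k + 1))]
    gcongr
    cases k with
    | zero =>
      simp only [fabiusDeriv, zero_mul, Nat.zero_div, pow_zero]
      rw [abs_le]
      constructor <;> linarith [fabius_nonneg hφ (2 * x), fabius_le_one hφ (2 * x),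
        fabius_nonneg hφ (2 * x - 1), fabius_le_one hφ (2 * x - 1)]
    | succ k =>
      rcases le_total (2 * x) 1 with hx | hx
      · rw [fabiusDeriv_of_nonpos hφ _ (2 * x - 1) (by linarith), sub_zero]
        exact ih _
      · rw [fabiusDeriv_of_one_le hφ _ (2 * x) hx, zero_sub, abs_neg]
        exact ih _

/-- Positivity at `2x` forces positivity of the average `φ x`; starting from `φ = 1` on `[1, ∞)`
this descends to every `x > 0`. -/
lemma fabius_pos {φ : ℝ →ᵇ ℝ} (hφ : φ ∈ transitionSet) (hfix : averaging φ = φ) {x : ℝ}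
    (hx : 0 < x) : 0 < φ x := by
  have step : ∀ y, 0 < φ (2 * y) → 0 < φ y := by
    intro y hy
    rw [← hfix, averaging_apply']
    exact intervalIntegral.integral_pos (by linarith) φ.continuous.continuousOn
      (fun u _ => fabius_nonneg hφ u) ⟨2 * y, ⟨by linarith, le_rfl⟩, hy⟩
  have iter : ∀ k : ℕ, ∀ y, 0 < φ (2 ^ k * y) → 0 < φ y := by
    intro k
    induction k with
    | zero => intro y hy; simpa using hy
    | succ k ih =>
      intro y hy
      refine step y (ih _ ?_)
      rwa [← mul_assoc, ← pow_succ]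
  obtain ⟨k, hk⟩ := pow_unbounded_of_one_lt x⁻¹ (one_lt_two (α := ℝ))
  refine iter k x ?_
  rw [transitionSet_eq_one hφ]
  · exact one_pos
  · have := mul_lt_mul_of_pos_right hk hx
    rw [inv_mul_cancel₀ hx.ne'] at this
    exact this.le

lemma fabius_lt_one {φ : ℝ →ᵇ ℝ} (hφ : φ ∈ transitionSet) (hfix : averaging φ = φ) {x : ℝ}
    (hx : x < 1) : φ x < 1 := by
  linarith [hφ.2.1 x, fabius_pos hφ hfix (sub_pos.2 hx)]

/-! ### The cutoff function -/

lemma iteratedDeriv_eq_of_hasDerivAt {E : ℕ → ℝ → ℝ}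
    (hE : ∀ k x, HasDerivAt (E k) (E (k + 1) x) x) (k : ℕ) : iteratedDeriv k (E 0) = E k := by
  induction k with
  | zero => exact iteratedDeriv_zero
  | succ k ih =>
    rw [iteratedDeriv_succ, ih]
    funext x
    exact (hE k x).deriv

/-- The `k`-th derivative of `x ↦ φ (n x - 1) - φ (x - n)`. -/
noncomputable def cutoffDeriv (φ : ℝ → ℝ) (n : ℕ) (k : ℕ) (x : ℝ) : ℝ :=
  (n:ℝ) ^ k * fabiusDeriv φ k (n * x - 1) - fabiusDeriv φ k (x - n)

lemma cutoffDeriv_hasDerivAt {φ : ℝ →ᵇ ℝ} (hfix : averaging φ = φ) (n k : ℕ) (x : ℝ) :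
    HasDerivAt (cutoffDeriv φ n k) (cutoffDeriv φ n (k + 1) x) x := by
  have l1 : HasDerivAt (fun x : ℝ => (n:ℝ) * x - 1) n x := by
    simpa using ((hasDerivAt_id x).const_mul (n:ℝ)).sub_const 1
  have l2 : HasDerivAt (fun x : ℝ => x - (n:ℝ)) 1 x := (hasDerivAt_id x).sub_const _
  have h1 := ((fabiusDeriv_hasDerivAt hfix k (n * x - 1)).comp x l1).const_mul ((n:ℝ) ^ k)
  have h2 := (fabiusDeriv_hasDerivAt hfix k (x - n)).comp x l2
  refine HasDerivAt.congr_deriv (f := cutoffDeriv φ n k) (h1.sub h2) ?_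
  rw [cutoffDeriv]
  ring

theorem exists_theta_n (n : ℕ) (hn : 2 ≤ n) :
    ∃ θ : ℝ → ℝ, MellinSchwartz θ ∧
      tsupport θ = Set.Icc ((n:ℝ)⁻¹) ((n:ℝ) + 1) ∧
      (∀ x ∈ Set.Icc (2 / (n:ℝ)) (n:ℝ), θ x = 1) ∧
      (∀ x ∈ Set.Ioi (0:ℝ), ∀ β : ℕ, 1 ≤ β →
        |iteratedDerivWithin β θ (Set.Ioi 0) x| ≤ (n:ℝ) ^ β * 2 ^ (β * (β + 1) / 2)) := by
  obtain ⟨φ, hφ, hfix⟩ := exists_fabius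
  have hn2 : (2:ℝ) ≤ n := by exact_mod_cast hn
  have hn0 : (0:ℝ) < n := by linarith
  have hinv : (n:ℝ)⁻¹ ≤ 1 := inv_le_one_of_one_le₀ (by linarith)
  have hE := cutoffDeriv_hasDerivAt hfix n
  have hiter := iteratedDeriv_eq_of_hasDerivAt hE
  have hwithin : ∀ k, ∀ x ∈ Set.Ioi (0:ℝ),
      iteratedDerivWithin k (cutoffDeriv φ n 0) (Set.Ioi 0) x = cutoffDeriv φ n k x := by
    intro k x hx
    rw [iteratedDerivWithin_of_isOpen isOpen_Ioi hx, hiter]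
  have hval : ∀ x, cutoffDeriv φ n 0 x = φ (n * x - 1) - φ (x - n) := by
    intro x
    simp [cutoffDeriv, fabiusDeriv]
  have hleft : ∀ k, ∀ x ≤ (n:ℝ)⁻¹, cutoffDeriv φ n k x = 0 := by
    intro k x hx
    have : n * x ≤ 1 := by
      have := mul_le_mul_of_nonneg_left hx hn0.le
      rwa [mul_inv_cancel₀ hn0.ne'] at this
    rw [cutoffDeriv, fabiusDeriv_of_nonpos hφ _ _ (by linarith),
      fabiusDeriv_of_nonpos hφ _ _ (by linarith)]
    simp
  have hright : ∀ k, ∀ x, (n:ℝ) + 1 ≤ x → cutoffDeriv φ n k x = 0 := by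
    intro k x hx
    have h2 : 1 ≤ n * x - 1 := by nlinarith
    cases k with
    | zero =>
      rw [hval, transitionSet_eq_one hφ h2, transitionSet_eq_one hφ (by linarith), sub_self]
    | succ k =>
      rw [cutoffDeriv, fabiusDeriv_of_one_le hφ _ _ h2,
        fabiusDeriv_of_one_le hφ _ _ (by linarith)]
      simp
  have hdiff : ContDiff ℝ (⊤ : ℕ∞) (cutoffDeriv φ n 0) := by
    refine contDiff_of_differentiable_iteratedDeriv fun m _ => ?_
    rw [hiter]
    exact fun x => (hE m x).differentiableAt
  refine ⟨cutoffDeriv φ n 0, ⟨hdiff.contDiffOn, ?_⟩, ?_, ?_, ?_⟩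
  · intro α β
    have hcont : ContinuousOn (fun x : ℝ => x ^ α * cutoffDeriv φ n β x)
        (Set.Icc ((n:ℝ)⁻¹) ((n:ℝ) + 1)) := by
      refine ContinuousOn.mul ?_ ?_
      · refine continuousOn_id.zpow₀ α fun x hx => Or.inl ?_
        exact ((inv_pos.2 hn0).trans_le hx.1).ne'
      · exact fun x _ => (hE β x).continuousAt.continuousWithinAt
    obtain ⟨C, hC⟩ := isCompact_Icc.exists_bound_of_continuousOn hcont
    refine ⟨max C 0, fun x hx => ?_⟩
    rw [hwithin β x hx]
    rcases le_total x (n:ℝ)⁻¹ with h1 | h1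
    · simp [hleft β x h1]
    rcases le_total ((n:ℝ) + 1) x with h2 | h2
    · simp [hright β x h2]
    · exact (hC x ⟨h1, h2⟩).trans (le_max_left _ _)
  · have hsupp : Function.support (cutoffDeriv φ n 0) = Set.Ioo ((n:ℝ)⁻¹) ((n:ℝ) + 1) := by
      ext x
      rw [Function.mem_support]
      constructor
      · intro hx
        constructor
        · by_contra h
          exact hx (hleft 0 x (not_lt.1 h))
        · by_contra h
          exact hx (hright 0 x (not_lt.1 h))
      · rintro ⟨h1, h2⟩
        rw [hval]
        have h3 : 0 < n * x - 1 := by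
          have := mul_lt_mul_of_pos_left h1 hn0
          rw [mul_inv_cancel₀ hn0.ne'] at this
          linarith
        rcases le_total x n with h | h
        · rw [hφ.1 (x - n) (by linarith), sub_zero]
          exact (fabius_pos hφ hfix h3).ne'
        · rw [transitionSet_eq_one hφ (show 1 ≤ n * x - 1 by nlinarith)]
          exact (sub_pos.2 (fabius_lt_one hφ hfix (by linarith))).ne'
    rw [tsupport, hsupp, closure_Ioo]
    linarith
  · rintro x ⟨h1, h2⟩
    have h3 : 1 ≤ n * x - 1 := by
      rw [div_le_iff₀ hn0] at h1
      linarith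
    rw [hval, transitionSet_eq_one hφ h3, hφ.1 (x - n) (by linarith), sub_zero]
  · intro x hx β hβ
    rw [hwithin β x hx]
    obtain ⟨k, rfl⟩ : ∃ k, β = k + 1 := ⟨β - 1, by omega⟩
    rcases le_total x n with h | h
    · rw [cutoffDeriv, fabiusDeriv_of_nonpos hφ _ (x - n) (by linarith), sub_zero, abs_mul,
        abs_of_pos (by positivity : (0:ℝ) < (n:ℝ) ^ (k + 1))]
      gcongr
      exact abs_fabiusDeriv_le hφ _ _
    · rw [cutoffDeriv, fabiusDeriv_of_one_le hφ _ (n * x - 1) (by nlinarith), mul_zero, zero_sub,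
        abs_neg]
      refine (abs_fabiusDeriv_le hφ _ _).trans ?_
      exact le_mul_of_one_le_left (by positivity) (one_le_pow₀ (by linarith))
end

section
/- The set 𝒮_c(ℝ₊) of all functions in 𝒮(ℝ₊) having compact support contained in (0,∞) is dense in 𝒮(ℝ₊): for every f ∈ 𝒮(ℝ₊), every ε > 0 and every finite set F of pairs (α, β) with α ∈ ℤ and β ∈ ℕ, there exists g ∈ 𝒮(ℝ₊) with compact support contained in (0,∞) such that p_{α,β}(f − g) < ε for every (α, β) ∈ F. -/
/-!
Multiply `f` by a smooth cutoff. With `T` the smooth transition from `0` (on `x ≤ 0`) to `1`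
(on `x ≥ 1`), put `h_n(x) = T(2 - n x) + T(x - n)`. For `n ≥ 2` this is `1` outside
`[1/n, n + 1]`, it vanishes on `[2/n, n]`, and `|h_n^(k)| ≤ C_k n^k`. The approximant is
`g = f - h_n f`, so the error is `h_n f`.

Where `h_n` is not locally zero, `x ≤ 2/n` or `x ≥ n`, hence `n ≤ w(x) := x + 2/x`. In the Leibniz
expansion of `x^α (h_n f)^(β)` each term is thus at most a constant times
`n^k |x^α f^(β-k)| ≤ n⁻¹ w^(k+1) |x^α f^(β-k)|`, and `w^(k+1) x^α f^(β-k)` is bounded because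
`w^(k+1)` is a Laurent polynomial in `x`. So every seminorm of the error is `O(1/n)`
(`cutoffErr_bound`); the same estimate shows that the error, and hence `g`, is in the Schwartz class.
-/

open MeasureTheory Set Filter

/-- The complement of the cutoff: equal to `1` near `0` and near `∞`, and to `0` on `[2/n, n]`. -/
noncomputable def cutoffErr (n : ℝ) (x : ℝ) : ℝ :=
  Real.smoothTransition (2 - n * x) + Real.smoothTransition (x - n)

lemma smoothTransition_deriv_bound (k : ℕ) :
    ∃ C : ℝ, 0 ≤ C ∧ ∀ x, |iteratedDeriv k Real.smoothTransition x| ≤ C := by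
  have hc : Continuous (iteratedDeriv k Real.smoothTransition) :=
    (Real.smoothTransition.contDiff (n := k)).continuous_iteratedDeriv' k
  obtain ⟨C, hC⟩ := (isCompact_Icc (a := (0:ℝ)) (b := 1)).exists_bound_of_continuousOn
    hc.continuousOn
  refine ⟨max C 1, by positivity, fun x => ?_⟩
  rcases lt_or_ge x 0 with h0 | h0
  · have : Real.smoothTransition =ᶠ[nhds x] fun _ => (0:ℝ) := by
      filter_upwards [Iio_mem_nhds h0] with y hy
      exact Real.smoothTransition.zero_of_nonpos (le_of_lt hy)
    rw [this.iteratedDeriv_eq]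
    simp
  rcases lt_or_ge 1 x with h1 | h1
  · have : Real.smoothTransition =ᶠ[nhds x] fun _ => (1:ℝ) := by
      filter_upwards [Ioi_mem_nhds h1] with y hy
      exact Real.smoothTransition.one_of_one_le (le_of_lt hy)
    rw [this.iteratedDeriv_eq, iteratedDeriv_const]
    split_ifs <;> simp
  · exact (hC x ⟨h0, h1⟩).trans (le_max_left _ _)

lemma cutoffErr_contDiff (n : ℝ) (m : ℕ∞) : ContDiff ℝ m (cutoffErr n) := by
  unfold cutoffErr
  exact (Real.smoothTransition.contDiff.comp (by fun_prop)).add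
    (Real.smoothTransition.contDiff.comp (by fun_prop))

lemma cutoffErr_deriv_bound (k : ℕ) :
    ∃ C : ℝ, 0 ≤ C ∧ ∀ n : ℝ, 1 ≤ n → ∀ x, |iteratedDeriv k (cutoffErr n) x| ≤ C * n ^ k := by
  obtain ⟨C, hC0, hC⟩ := smoothTransition_deriv_bound k
  refine ⟨2 * C, by positivity, fun n hn x => ?_⟩
  have hT : ContDiff ℝ k Real.smoothTransition := Real.smoothTransition.contDiff (n := k)
  have e1 : iteratedDeriv k (fun x => Real.smoothTransition (2 - n * x)) x
      = n ^ k * ((-1) ^ k * iteratedDeriv k Real.smoothTransition (2 - n * x)) := by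
    have hT2 : ContDiff ℝ k (fun z => Real.smoothTransition (2 - z)) := hT.comp (by fun_prop)
    rw [iteratedDeriv_comp_const_mul hT2 n, iteratedDeriv_comp_const_sub]
    simp
  have e2 : iteratedDeriv k (fun x => Real.smoothTransition (x - n)) x
      = iteratedDeriv k Real.smoothTransition (x - n) := by
    rw [iteratedDeriv_comp_sub_const]
  have e : iteratedDeriv k (cutoffErr n) x = _ :=
    iteratedDeriv_fun_add (n := k) (x := x)
      (f := fun x => Real.smoothTransition (2 - n * x))
      (g := fun x => Real.smoothTransition (x - n))
      (hT.comp (by fun_prop)).contDiffAt (hT.comp (by fun_prop)).contDiffAt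
  rw [e, e1, e2]
  have hnk : (1:ℝ) ≤ n ^ k := one_le_pow₀ hn
  refine (abs_add_le _ _).trans ?_
  have a1 : |n ^ k * ((-1) ^ k * iteratedDeriv k Real.smoothTransition (2 - n * x))|
      ≤ n ^ k * C := by
    rw [abs_mul, abs_mul, abs_pow (-1 : ℝ), abs_neg, abs_one, one_pow, one_mul,
      abs_of_nonneg (by positivity)]
    exact mul_le_mul_of_nonneg_left (hC _) (by positivity)
  have a2 := hC (x - n)
  nlinarith

/-- Functions in the Schwartz class absorb any power of the weight `x + 2/x`. -/
lemma weight_bound {f : ℝ → ℝ} (hf : MellinSchwartz f) (j m : ℕ) :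
    ∀ α : ℤ, ∃ M : ℝ, ∀ x : ℝ, 0 < x →
      (x + 2 / x) ^ m * |x ^ α * iteratedDerivWithin j f (Set.Ioi 0) x| ≤ M := by
  induction m with
  | zero =>
    intro α
    obtain ⟨M, hM⟩ := hf.2 α j
    exact ⟨M, fun x hx => by simpa using hM x hx⟩
  | succ m ih =>
    intro α
    obtain ⟨M₁, h₁⟩ := ih (α + 1)
    obtain ⟨M₂, h₂⟩ := ih (α - 1)
    refine ⟨M₁ + 2 * M₂, fun x hx => ?_⟩
    have b₁ := h₁ x hx
    have b₂ := h₂ x hx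
    rw [zpow_add_one₀ hx.ne', abs_mul, abs_mul, abs_of_pos hx] at b₁
    rw [zpow_sub_one₀ hx.ne', abs_mul, abs_mul, abs_of_pos (inv_pos.2 hx)] at b₂
    rw [abs_mul]
    calc _ = (x + 2 / x) ^ m * (|x ^ α| * x * |iteratedDerivWithin j f (Set.Ioi 0) x|)
          + 2 * ((x + 2 / x) ^ m * (|x ^ α| * x⁻¹ * |iteratedDerivWithin j f (Set.Ioi 0) x|)) := by
            rw [pow_succ, div_eq_mul_inv]; ring
      _ ≤ _ := by linarith

lemma cutoffErr_bound {f : ℝ → ℝ} (hf : MellinSchwartz f) (α : ℤ) (β : ℕ) :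
    ∃ C : ℝ, 0 ≤ C ∧ ∀ n : ℝ, 2 ≤ n → ∀ x ∈ Set.Ioi (0:ℝ),
      |x ^ α * iteratedDerivWithin β (cutoffErr n * f) (Set.Ioi 0) x| ≤ C / n := by
  choose A hA0 hA using cutoffErr_deriv_bound
  choose M hM using fun k => weight_bound hf (β - k) (k + 1) α
  have hM0 : ∀ k, 0 ≤ M k := fun k => le_trans (by positivity) (hM k 1 one_pos)
  refine ⟨∑ k ∈ Finset.range (β + 1), β.choose k * A k * M k,
    Finset.sum_nonneg fun k _ => mul_nonneg (mul_nonneg (by positivity) (hA0 k)) (hM0 k),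
    fun n hn x hx => ?_⟩
  have hx' : 0 < x := hx
  have hn0 : 0 < n := by linarith
  by_cases hmid : 2 / n < x ∧ x < n
  · -- Here the product vanishes on a neighbourhood of `x`.
    have hz : cutoffErr n * f =ᶠ[nhds x] fun _ => (0:ℝ) := by
      filter_upwards [Ioo_mem_nhds hmid.1 hmid.2] with y hy
      have h1 : 2 - n * y ≤ 0 := by
        have := (div_lt_iff₀ hn0).1 hy.1
        linarith
      have h2 : y - n ≤ 0 := by linarith [hy.2]
      simp [cutoffErr, Real.smoothTransition.zero_of_nonpos h1,
        Real.smoothTransition.zero_of_nonpos h2]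
    rw [iteratedDerivWithin_of_isOpen isOpen_Ioi hx, hz.iteratedDeriv_eq]
    simp only [iteratedDeriv_const]
    simp only [ite_self, mul_zero, abs_zero]
    exact div_nonneg (Finset.sum_nonneg fun k _ =>
      mul_nonneg (mul_nonneg (by positivity) (hA0 k)) (hM0 k)) hn0.le
  have hw : n ≤ x + 2 / x := by
    by_cases h : 2 / n < x
    · have : n ≤ x := not_lt.1 fun h' => hmid ⟨h, h'⟩
      have : 0 < 2 / x := by positivity
      linarith
    · have h3 : x * n ≤ 2 := (le_div_iff₀ hn0).1 (not_lt.1 h)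
      have : n ≤ 2 / x := (le_div_iff₀ hx').2 (by linarith)
      linarith
  have hfx : ContDiffWithinAt ℝ β f (Set.Ioi 0) x :=
    (hf.1 x hx).of_le (by exact_mod_cast le_top)
  have hcx : ContDiffWithinAt ℝ β (cutoffErr n) (Set.Ioi 0) x :=
    (cutoffErr_contDiff n β).contDiffAt.contDiffWithinAt
  rw [iteratedDerivWithin_mul hx (uniqueDiffOn_Ioi 0) hcx hfx, Finset.mul_sum, Finset.sum_div]
  refine (Finset.abs_sum_le_sum_abs _ _).trans (Finset.sum_le_sum fun k _ => ?_)
  rw [iteratedDerivWithin_of_isOpen (f := cutoffErr n) isOpen_Ioi hx]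
  set D := iteratedDerivWithin (β - k) f (Set.Ioi 0) x
  have key : n ^ k * |x ^ α * D| ≤ M k / n := by
    rw [le_div_iff₀ hn0]
    calc n ^ k * |x ^ α * D| * n = n ^ (k + 1) * |x ^ α * D| := by ring
      _ ≤ (x + 2 / x) ^ (k + 1) * |x ^ α * D| := by gcongr
      _ ≤ M k := hM k x hx'
  calc |x ^ α * (β.choose k * iteratedDeriv k (cutoffErr n) x * D)|
      = β.choose k * |iteratedDeriv k (cutoffErr n) x| * |x ^ α * D| := by
        simp only [abs_mul, Nat.abs_cast]; ring
    _ ≤ β.choose k * (A k * n ^ k) * |x ^ α * D| := by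
        gcongr
        exact hA k n (by linarith) x
    _ = β.choose k * A k * (n ^ k * |x ^ α * D|) := by ring
    _ ≤ β.choose k * A k * (M k / n) :=
        mul_le_mul_of_nonneg_left key (mul_nonneg (by positivity) (hA0 k))
    _ = _ := by ring

lemma MellinSchwartz.sub {f g : ℝ → ℝ} (hf : MellinSchwartz f) (hg : MellinSchwartz g) :
    MellinSchwartz (f - g) := by
  refine ⟨hf.1.sub hg.1, fun α β => ?_⟩
  obtain ⟨M, hM⟩ := hf.2 α β
  obtain ⟨N, hN⟩ := hg.2 α β
  refine ⟨M + N, fun x hx => ?_⟩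
  rw [iteratedDerivWithin_sub hx (uniqueDiffOn_Ioi 0)
    ((hf.1 x hx).of_le (by exact_mod_cast le_top)) ((hg.1 x hx).of_le (by exact_mod_cast le_top)),
    mul_sub]
  exact (abs_sub _ _).trans (add_le_add (hM x hx) (hN x hx))

lemma support_sub_cutoffErr {n : ℝ} (hn : 2 ≤ n) (f : ℝ → ℝ) :
    Function.support (f - cutoffErr n * f) ⊆ Set.Icc (1 / n) (n + 1) := by
  have hn0 : 0 < n := by linarith
  have hinv : 1 / n ≤ 1 := (div_le_one hn0).2 (by linarith)
  intro x hx
  by_contra hcon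
  apply hx
  have h1 : cutoffErr n x = 1 := by
    unfold cutoffErr
    rcases lt_or_ge x (1 / n) with h | h
    · have := (lt_div_iff₀ hn0).1 h
      rw [Real.smoothTransition.one_of_one_le (by linarith),
        Real.smoothTransition.zero_of_nonpos (by linarith), add_zero]
    · have h' : n + 1 < x := not_le.1 fun h' => hcon ⟨h, h'⟩
      rw [Real.smoothTransition.zero_of_nonpos (by nlinarith),
        Real.smoothTransition.one_of_one_le (by linarith), zero_add]
  simp [h1]

theorem compactly_supported_dense
    (f : ℝ → ℝ) (hf : MellinSchwartz f) (ε : ℝ) (hε : 0 < ε)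
    (F : Finset (ℤ × ℕ)) :
    ∃ g : ℝ → ℝ, MellinSchwartz g ∧ IsCompact (tsupport g) ∧
      tsupport g ⊆ Set.Ioi 0 ∧
      ∀ ab ∈ F, pSemi ab.1 ab.2 (fun x => f x - g x) < ε := by
  choose C hC0 hC using fun ab : ℤ × ℕ => cutoffErr_bound hf ab.1 ab.2
  have hev : ∀ᶠ n : ℝ in atTop, 2 ≤ n ∧ ∀ ab ∈ F, C ab / n < ε := by
    refine (eventually_ge_atTop 2).and ((eventually_all_finset F).2 fun ab _ => ?_)
    exact (tendsto_const_nhds.div_atTop tendsto_id).eventually_lt_const hε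
  obtain ⟨n, hn, hnF⟩ := hev.exists
  have hn0 : 0 < n := by linarith
  have hts : tsupport (f - cutoffErr n * f) ⊆ Set.Icc (1 / n) (n + 1) :=
    closure_minimal (support_sub_cutoffErr hn f) isClosed_Icc
  refine ⟨f - cutoffErr n * f, hf.sub ⟨?_, fun α β => ⟨_, hC (α, β) n hn⟩⟩,
    isCompact_Icc.of_isClosed_subset (isClosed_tsupport _) hts,
    hts.trans fun x hx => lt_of_lt_of_le (by positivity) hx.1, fun ab hab => ?_⟩
  · exact (cutoffErr_contDiff n ⊤).contDiffOn.mul hf.1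
  · have he : (fun x => f x - (f - cutoffErr n * f) x) = cutoffErr n * f := by
      funext x; simp
    rw [he]
    exact (Real.iSup_le (fun x : Set.Ioi (0:ℝ) => hC ab n hn x x.2)
      (div_nonneg (hC0 ab) hn0.le)).trans_lt (hnF ab hab)
end

section
/- Let f, g ∈ 𝒮(ℝ₊), α ∈ ℤ and β ∈ ℕ. Then for every x > 0 the integral F_{α,β}(x) := ∫₀^∞ y^{−(α+1)} f^{(β)}(x y^{−1}) g(y) dy is finite (the integrand is integrable over (0,∞)), and the function F_{α,β} is differentiable on (0,∞) with derivative F_{α,β}′(x) = ∫₀^∞ y^{−(α+2)} f^{(β+1)}(x y^{−1}) g(y) dy. Consequently, the Mellin convolution f⋆g is infinitely differentiable on (0,∞) and (f⋆g)^{(β)}(x) = ∫₀^∞ y^{−(β+1)} f^{(β)}(x y^{−1}) g(y) dy for every β ∈ ℕ and x > 0. -/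
/-!
Every derivative `f^(β)` is bounded on `(0,∞)`, and `y ^ k * g y` is integrable on `(0,∞)` for every
integer `k`, because the decay of `g` at both ends gives `|y ^ k * g y| ≤ C / (1 + y²)`. Hence the
integrand `y ^ k * f^(β)(x / y) * g y` is dominated by `M * |y ^ k * g y|`, uniformly in `x > 0`
(`integrableOn_kernel`). The same domination, applied to the `x`-derivative of the integrand, allows
differentiation under the integral sign (`hasDerivAt_kernel_integral`). Iterating this with `α = β`
gives all derivatives of the Mellin convolution (`iteratedDerivWithin_mconv`).
-/

open MeasureTheory Set Filter

/-- The decay of `g` at infinity and at zero, read off from the exponents `k + 2` and `k`,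
dominates `y ^ k * g y` by a multiple of `(1 + y²)⁻¹`. -/
lemma MellinSchwartz.integrableOn_zpow_mul {g : ℝ → ℝ} (hg : MellinSchwartz g) (k : ℤ) :
    IntegrableOn (fun y => y ^ k * g y) (Ioi 0) := by
  obtain ⟨A, hA⟩ := hg.2 k 0
  obtain ⟨B, hB⟩ := hg.2 (k + 2) 0
  have hmeas : AEStronglyMeasurable (fun y : ℝ => y ^ k * g y) (volume.restrict (Ioi 0)) := by
    refine ContinuousOn.aestronglyMeasurable ?_ measurableSet_Ioi
    exact (continuousOn_id.zpow₀ k fun y hy => Or.inl (ne_of_gt hy)).mul hg.1.continuousOn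
  refine Integrable.mono' ((integrable_inv_one_add_sq.const_mul (A + B)).integrableOn) hmeas ?_
  refine (ae_restrict_iff' measurableSet_Ioi).2 (ae_of_all _ fun y hy => ?_)
  have h1 := hA y hy
  have h2 := hB y hy
  have hy0 : y ≠ 0 := ne_of_gt hy
  simp only [iteratedDerivWithin_zero] at h1 h2
  have h3 : |y ^ (k + 2) * g y| = y ^ 2 * |y ^ k * g y| := by
    rw [zpow_add₀ hy0, mul_right_comm, mul_comm, abs_mul]
    congr 1
    rw [abs_of_nonneg (by positivity)]
    norm_cast
  rw [h3] at h2
  rw [Real.norm_eq_abs, ← div_eq_mul_inv, le_div_iff₀ (by positivity)]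
  linarith

lemma MellinSchwartz.hasDerivAt_iteratedDerivWithin {f : ℝ → ℝ} (hf : MellinSchwartz f) (β : ℕ)
    {x : ℝ} (hx : 0 < x) :
    HasDerivAt (iteratedDerivWithin β f (Ioi 0)) (iteratedDerivWithin (β + 1) f (Ioi 0) x) x := by
  have h := hf.1.differentiableOn_iteratedDerivWithin (m := β)
    (by exact_mod_cast ENat.natCast_lt_top β) (uniqueDiffOn_Ioi 0)
  rw [iteratedDerivWithin_succ]
  exact (h x hx).hasDerivWithinAt.hasDerivAt (Ioi_mem_nhds hx)

lemma aestronglyMeasurable_kernel {f g : ℝ → ℝ} (hf : MellinSchwartz f) (hg : MellinSchwartz g)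
    (k : ℤ) (β : ℕ) {x : ℝ} (hx : 0 < x) :
    AEStronglyMeasurable (fun y => y ^ k * iteratedDerivWithin β f (Ioi 0) (x * y⁻¹) * g y)
      (volume.restrict (Ioi 0)) := by
  refine ContinuousOn.aestronglyMeasurable ?_ measurableSet_Ioi
  have hne : ∀ y ∈ Ioi (0 : ℝ), y ≠ 0 := fun y hy => ne_of_gt hy
  have hD : ContinuousOn (iteratedDerivWithin β f (Ioi 0)) (Ioi 0) := fun z hz =>
    (hf.hasDerivAt_iteratedDerivWithin β hz).continuousAt.continuousWithinAt
  have hmap : MapsTo (fun y : ℝ => x * y⁻¹) (Ioi 0) (Ioi 0) := fun y hy =>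
    mul_pos hx (inv_pos.2 hy)
  exact ((continuousOn_id.zpow₀ k fun y hy => Or.inl (hne y hy)).mul
    (hD.comp (continuousOn_const.mul (continuousOn_id.inv₀ hne)) hmap)).mul hg.1.continuousOn

/-- A bound on the integrand that does not depend on `x`. -/
lemma exists_kernel_bound {f : ℝ → ℝ} (hf : MellinSchwartz f) (g : ℝ → ℝ) (k : ℤ) (β : ℕ) :
    ∃ M : ℝ, ∀ x ∈ Ioi (0 : ℝ), ∀ y ∈ Ioi (0 : ℝ),
      ‖y ^ k * iteratedDerivWithin β f (Ioi 0) (x * y⁻¹) * g y‖ ≤ M * ‖y ^ k * g y‖ := by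
  obtain ⟨M, hM⟩ := hf.2 0 β
  refine ⟨M, fun x hx y hy => ?_⟩
  have h := hM (x * y⁻¹) (mem_Ioi.2 (mul_pos hx (inv_pos.2 hy)))
  rw [zpow_zero, one_mul, ← Real.norm_eq_abs] at h
  rw [mul_right_comm, norm_mul, mul_comm]
  gcongr

lemma integrableOn_kernel {f g : ℝ → ℝ} (hf : MellinSchwartz f) (hg : MellinSchwartz g)
    (k : ℤ) (β : ℕ) {x : ℝ} (hx : 0 < x) :
    IntegrableOn (fun y => y ^ k * iteratedDerivWithin β f (Ioi 0) (x * y⁻¹) * g y) (Ioi 0) := by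
  obtain ⟨M, hM⟩ := exists_kernel_bound hf g k β
  refine Integrable.mono' ((hg.integrableOn_zpow_mul k).norm.const_mul M)
    (aestronglyMeasurable_kernel hf hg k β hx) ?_
  exact (ae_restrict_iff' measurableSet_Ioi).2 (ae_of_all _ fun y hy => hM x hx y hy)

/-- Differentiation under the integral sign. The dominating function is valid on all of `(0,∞)`,
so `(0,∞)` itself serves as the neighbourhood of `x`. -/
lemma hasDerivAt_kernel_integral {f g : ℝ → ℝ} (hf : MellinSchwartz f) (hg : MellinSchwartz g)
    (α : ℤ) (β : ℕ) {x : ℝ} (hx : 0 < x) :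
    HasDerivAt
      (fun x' => ∫ y in Ioi (0 : ℝ),
        y ^ (-(α + 1)) * iteratedDerivWithin β f (Ioi 0) (x' * y⁻¹) * g y)
      (∫ y in Ioi (0 : ℝ),
        y ^ (-(α + 2)) * iteratedDerivWithin (β + 1) f (Ioi 0) (x * y⁻¹) * g y) x := by
  obtain ⟨M, hM⟩ := exists_kernel_bound hf g (-(α + 2)) (β + 1)
  refine (hasDerivAt_integral_of_dominated_loc_of_deriv_le
    (μ := volume.restrict (Ioi 0))
    (F := fun x' y => y ^ (-(α + 1)) * iteratedDerivWithin β f (Ioi 0) (x' * y⁻¹) * g y)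
    (F' := fun x' y => y ^ (-(α + 2)) * iteratedDerivWithin (β + 1) f (Ioi 0) (x' * y⁻¹) * g y)
    (bound := fun y => M * ‖y ^ (-(α + 2)) * g y‖) (Ioi_mem_nhds hx) ?_
    (integrableOn_kernel hf hg _ β hx) (aestronglyMeasurable_kernel hf hg _ (β + 1) hx) ?_
    ((hg.integrableOn_zpow_mul _).norm.const_mul M) ?_).2
  · filter_upwards [Ioi_mem_nhds hx] with x' hx'
    exact aestronglyMeasurable_kernel hf hg _ β hx'
  · exact (ae_restrict_iff' measurableSet_Ioi).2 (ae_of_all _ fun y hy x' hx' => hM x' hx' y hy)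
  · refine (ae_restrict_iff' measurableSet_Ioi).2 (ae_of_all _ fun y hy x' hx' => ?_)
    have hy0 : y ≠ 0 := ne_of_gt hy
    have hcomp := (hf.hasDerivAt_iteratedDerivWithin β (mul_pos hx' (inv_pos.2 hy))).comp x'
      ((hasDerivAt_id x').mul_const y⁻¹)
    refine ((hcomp.const_mul (y ^ (-(α + 1)))).mul_const (g y)).congr_deriv ?_
    rw [show -(α + 2) = -(α + 1) + (-1) by ring, zpow_add₀ hy0, zpow_neg_one]
    ring

lemma iteratedDerivWithin_mconv {f g : ℝ → ℝ} (hf : MellinSchwartz f) (hg : MellinSchwartz g)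
    (n : ℕ) : ∀ x ∈ Ioi (0 : ℝ), iteratedDerivWithin n (mconv f g) (Ioi 0) x =
      ∫ y in Ioi (0 : ℝ),
        y ^ (-((n : ℤ) + 1)) * iteratedDerivWithin n f (Ioi 0) (x * y⁻¹) * g y := by
  induction n with
  | zero =>
    intro x _
    simp [mconv]
  | succ n ih =>
    intro x hx
    rw [iteratedDerivWithin_succ, derivWithin_congr ih (ih x hx),
      (hasDerivAt_kernel_integral hf hg n n hx).hasDerivWithinAt.derivWithin
        (uniqueDiffOn_Ioi 0 x hx)]
    rw [show -(((n + 1 : ℕ) : ℤ) + 1) = -((n : ℤ) + 2) by push_cast; ring]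

theorem mellin_convolution_smooth
    (f g : ℝ → ℝ) (hf : MellinSchwartz f) (hg : MellinSchwartz g)
    (α : ℤ) (β : ℕ) :
    (∀ x ∈ Set.Ioi (0:ℝ), MeasureTheory.IntegrableOn
        (fun y => y ^ (-(α + 1)) * iteratedDerivWithin β f (Set.Ioi 0) (x * y⁻¹) * g y)
        (Set.Ioi 0)) ∧
    (∀ x ∈ Set.Ioi (0:ℝ), HasDerivAt
        (fun x' => ∫ y in Set.Ioi (0:ℝ),
          y ^ (-(α + 1)) * iteratedDerivWithin β f (Set.Ioi 0) (x' * y⁻¹) * g y)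
        (∫ y in Set.Ioi (0:ℝ),
          y ^ (-(α + 2)) * iteratedDerivWithin (β + 1) f (Set.Ioi 0) (x * y⁻¹) * g y) x) ∧
    ContDiffOn ℝ (⊤ : ℕ∞) (mconv f g) (Set.Ioi 0) ∧
    (∀ β' : ℕ, ∀ x ∈ Set.Ioi (0:ℝ),
      iteratedDerivWithin β' (mconv f g) (Set.Ioi 0) x =
        ∫ y in Set.Ioi (0:ℝ),
          y ^ (-((β' : ℤ) + 1)) * iteratedDerivWithin β' f (Set.Ioi 0) (x * y⁻¹) * g y) := by
  refine ⟨fun x hx => integrableOn_kernel hf hg _ β hx,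
    fun x hx => hasDerivAt_kernel_integral hf hg α β hx, ?_, iteratedDerivWithin_mconv hf hg⟩
  refine contDiffOn_of_differentiableOn_deriv fun n _ => ?_
  refine DifferentiableOn.congr (fun x hx => ?_) (iteratedDerivWithin_mconv hf hg n)
  exact (hasDerivAt_kernel_integral hf hg n n hx).differentiableAt.differentiableWithinAt
end

section
/- If f, g ∈ 𝒮(ℝ₊), then their Mellin convolution f⋆g also belongs to 𝒮(ℝ₊); that is, f⋆g is smooth on (0,∞) and for every α ∈ ℤ and β ∈ ℕ one has sup_{x>0} |x^α (f⋆g)^{(β)}(x)| < ∞. -/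
/-!
Differentiating under the integral sign gives `(f⋆g)' = f' ⋆ (y⁻¹ g)` on `(0,∞)`
(`hasDerivAt_mconv`). The factor `y⁻¹ g` is again continuous with all its power weights bounded
(`MellinDecay`), and `f'` is again in `𝒮(ℝ₊)`, so smoothness and the bounds for all derivatives
follow by induction on the order. The order-zero bound (`mconv_bound`) comes from splitting
`x ^ α = (x y⁻¹) ^ α * y ^ α`, which gives
`|x ^ α (f⋆g)(x)| ≤ sup |u ^ α f(u)| * ∫ |y⁻¹ y ^ α g(y)| dy < ∞`.
-/

open MeasureTheory Set Filter

/-- Functions continuous on `(0,∞)` that stay bounded there after multiplication by any integer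
power of the variable; this is all that is needed of the second factor of a Mellin convolution. -/
def MellinDecay (g : ℝ → ℝ) : Prop :=
  ContinuousOn g (Ioi 0) ∧ ∀ α : ℤ, ∃ M : ℝ, ∀ x ∈ Ioi (0:ℝ), |x ^ α * g x| ≤ M

lemma MellinSchwartz.decay {f : ℝ → ℝ} (hf : MellinSchwartz f) : MellinDecay f :=
  ⟨hf.1.continuousOn, fun α => by simpa using hf.2 α 0⟩

lemma MellinSchwartz.derivWithin {f : ℝ → ℝ} (hf : MellinSchwartz f) :
    MellinSchwartz (derivWithin f (Ioi 0)) := by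
  refine ⟨hf.1.derivWithin (uniqueDiffOn_Ioi 0) (by simp), fun α β => ?_⟩
  obtain ⟨M, hM⟩ := hf.2 α (β + 1)
  refine ⟨M, fun x hx => ?_⟩
  have := hM x hx
  rwa [iteratedDerivWithin_succ'] at this

lemma MellinDecay.zpow_mul {g : ℝ → ℝ} (hg : MellinDecay g) (γ : ℤ) :
    MellinDecay (fun y => y ^ γ * g y) := by
  refine ⟨(ContinuousOn.zpow₀ continuousOn_id γ fun y hy => Or.inl (ne_of_gt hy)).mul hg.1,
    fun α => ?_⟩
  obtain ⟨M, hM⟩ := hg.2 (α + γ)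
  refine ⟨M, fun x hx => ?_⟩
  have := hM x hx
  rwa [zpow_add₀ (ne_of_gt hx), mul_assoc] at this

lemma MellinDecay.inv_mul {g : ℝ → ℝ} (hg : MellinDecay g) :
    MellinDecay (fun y => y⁻¹ * g y) := by
  simpa using hg.zpow_mul (-1)

lemma MellinDecay.integrableOn {g : ℝ → ℝ} (hg : MellinDecay g) : IntegrableOn g (Ioi 0) := by
  obtain ⟨M, hM⟩ := hg.2 0
  obtain ⟨N, hN⟩ := hg.2 2
  refine Integrable.mono' (g := fun y => (M + N) * (1 + y ^ 2)⁻¹)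
    (integrable_inv_one_add_sq.const_mul _).integrableOn
    (hg.1.aestronglyMeasurable measurableSet_Ioi) ?_
  filter_upwards [ae_restrict_mem measurableSet_Ioi] with y hy
  have h0 := hM y hy
  have h2 := hN y hy
  simp only [zpow_zero, one_mul] at h0
  rw [abs_mul, zpow_ofNat, abs_of_nonneg (sq_nonneg y)] at h2
  rw [Real.norm_eq_abs, ← div_eq_mul_inv, le_div_iff₀ (by positivity)]
  linarith

lemma MellinDecay.comp_continuousOn {f : ℝ → ℝ} (hf : MellinDecay f) {x : ℝ} (hx : 0 < x) :
    ContinuousOn (fun y => f (x * y⁻¹)) (Ioi 0) := by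
  refine hf.1.comp (continuousOn_const.mul
    (continuousOn_id.inv₀ fun y hy => ne_of_gt hy)) fun y hy => ?_
  exact mul_pos hx (inv_pos.2 hy)

lemma mconv_integrand_continuousOn {f g : ℝ → ℝ} (hf : MellinDecay f) (hg : MellinDecay g)
    {x : ℝ} (hx : 0 < x) : ContinuousOn (fun y => y⁻¹ * f (x * y⁻¹) * g y) (Ioi 0) :=
  ((continuousOn_id.inv₀ fun _ hy => ne_of_gt hy).mul (hf.comp_continuousOn hx)).mul hg.1

lemma mconv_integrand_integrable {f g : ℝ → ℝ} (hf : MellinDecay f) (hg : MellinDecay g)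
    {x : ℝ} (hx : 0 < x) : IntegrableOn (fun y => y⁻¹ * f (x * y⁻¹) * g y) (Ioi 0) := by
  obtain ⟨M, hM⟩ := hf.2 0
  refine Integrable.mono' (hg.inv_mul.integrableOn.norm.const_mul M)
    ((mconv_integrand_continuousOn hf hg hx).aestronglyMeasurable measurableSet_Ioi) ?_
  filter_upwards [ae_restrict_mem measurableSet_Ioi] with y hy
  have h := hM (x * y⁻¹) (mul_pos hx (inv_pos.2 hy))
  rw [zpow_zero, one_mul] at h
  calc ‖y⁻¹ * f (x * y⁻¹) * g y‖ = |f (x * y⁻¹)| * ‖y⁻¹ * g y‖ := by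
        simp only [Real.norm_eq_abs, abs_mul]; ring
    _ ≤ M * ‖y⁻¹ * g y‖ := by gcongr

lemma mconv_bound {f g : ℝ → ℝ} (hf : MellinDecay f) (hg : MellinDecay g) (α : ℤ) :
    ∃ M : ℝ, ∀ x ∈ Ioi (0:ℝ), |x ^ α * mconv f g x| ≤ M := by
  obtain ⟨M, hM⟩ := hf.2 α
  have hint := (hg.zpow_mul α).inv_mul.integrableOn.norm.const_mul M
  refine ⟨∫ y in Ioi (0:ℝ), M * ‖y⁻¹ * (y ^ α * g y)‖, fun x hx => ?_⟩
  rw [mconv, ← integral_const_mul, ← Real.norm_eq_abs]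
  refine norm_integral_le_of_norm_le hint ?_
  filter_upwards [ae_restrict_mem measurableSet_Ioi] with y hy
  have h := hM (x * y⁻¹) (mul_pos (mem_Ioi.1 hx) (inv_pos.2 (mem_Ioi.1 hy)))
  have hxy : x ^ α = (x * y⁻¹) ^ α * y ^ α := by
    rw [← mul_zpow, inv_mul_cancel_right₀ (ne_of_gt hy)]
  calc ‖x ^ α * (y⁻¹ * f (x * y⁻¹) * g y)‖
      = |(x * y⁻¹) ^ α * f (x * y⁻¹)| * ‖y⁻¹ * (y ^ α * g y)‖ := by
        rw [hxy, ← Real.norm_eq_abs, ← norm_mul]; congr 1; ring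
    _ ≤ M * ‖y⁻¹ * (y ^ α * g y)‖ := by gcongr

lemma hasDerivAt_mconv {f g : ℝ → ℝ} (hf : MellinSchwartz f) (hg : MellinDecay g)
    {x : ℝ} (hx : 0 < x) :
    HasDerivAt (mconv f g) (mconv (derivWithin f (Ioi 0)) (fun y => y⁻¹ * g y) x) x := by
  obtain ⟨M, hM⟩ := hf.derivWithin.decay.2 0
  refine (hasDerivAt_integral_of_dominated_loc_of_deriv_le (s := Ioi 0)
    (F := fun (x y : ℝ) => y⁻¹ * f (x * y⁻¹) * g y)
    (F' := fun (x y : ℝ) => y⁻¹ * derivWithin f (Ioi 0) (x * y⁻¹) * (y⁻¹ * g y))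
    (bound := fun y => M * ‖y⁻¹ * (y⁻¹ * g y)‖) (Ioi_mem_nhds hx) ?_
    (mconv_integrand_integrable hf.decay hg hx)
    ((mconv_integrand_continuousOn hf.derivWithin.decay hg.inv_mul hx).aestronglyMeasurable
      measurableSet_Ioi) ?_ (hg.inv_mul.inv_mul.integrableOn.norm.const_mul M) ?_).2
  · filter_upwards [Ioi_mem_nhds hx] with z hz
    exact (mconv_integrand_continuousOn hf.decay hg hz).aestronglyMeasurable measurableSet_Ioi
  · filter_upwards [ae_restrict_mem measurableSet_Ioi] with y hy z hz
    have h := hM (z * y⁻¹) (mul_pos (mem_Ioi.1 hz) (inv_pos.2 (mem_Ioi.1 hy)))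
    rw [zpow_zero, one_mul] at h
    calc ‖y⁻¹ * derivWithin f (Ioi 0) (z * y⁻¹) * (y⁻¹ * g y)‖
        = |derivWithin f (Ioi 0) (z * y⁻¹)| * ‖y⁻¹ * (y⁻¹ * g y)‖ := by
          simp only [Real.norm_eq_abs, abs_mul]; ring
      _ ≤ M * ‖y⁻¹ * (y⁻¹ * g y)‖ := by gcongr
  · filter_upwards [ae_restrict_mem measurableSet_Ioi] with y hy z hz
    have hzy : z * y⁻¹ ∈ Ioi (0:ℝ) := mul_pos (mem_Ioi.1 hz) (inv_pos.2 (mem_Ioi.1 hy))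
    have hd : HasDerivAt f (derivWithin f (Ioi 0) (z * y⁻¹)) (z * y⁻¹) :=
      ((hf.1.differentiableOn (by simp)) _ hzy).hasDerivWithinAt.hasDerivAt (Ioi_mem_nhds hzy)
    have := ((hd.comp z ((hasDerivAt_id z).mul_const y⁻¹)).const_mul y⁻¹).mul_const (g y)
    refine this.congr_deriv ?_
    ring

lemma derivWithin_mconv {f g : ℝ → ℝ} (hf : MellinSchwartz f) (hg : MellinDecay g) :
    EqOn (derivWithin (mconv f g) (Ioi 0))
      (mconv (derivWithin f (Ioi 0)) (fun y => y⁻¹ * g y)) (Ioi 0) := fun x hx =>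
  (hasDerivAt_mconv hf hg hx).hasDerivWithinAt.derivWithin (uniqueDiffOn_Ioi 0 x hx)

lemma contDiffOn_mconv (n : ℕ) {f g : ℝ → ℝ} (hf : MellinSchwartz f) (hg : MellinDecay g) :
    ContDiffOn ℝ n (mconv f g) (Ioi 0) := by
  induction n generalizing f g with
  | zero =>
    exact contDiffOn_zero.2 fun x hx =>
      (hasDerivAt_mconv hf hg hx).continuousAt.continuousWithinAt
  | succ n ih =>
    push_cast
    refine (contDiffOn_succ_iff_derivWithin (uniqueDiffOn_Ioi 0)).2 ⟨fun x hx =>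
      (hasDerivAt_mconv hf hg hx).differentiableAt.differentiableWithinAt, by simp, ?_⟩
    exact (ih hf.derivWithin hg.inv_mul).congr (derivWithin_mconv hf hg)

lemma iteratedDerivWithin_mconv_bound (α : ℤ) (β : ℕ) {f g : ℝ → ℝ} (hf : MellinSchwartz f)
    (hg : MellinDecay g) : ∃ M : ℝ, ∀ x ∈ Ioi (0:ℝ),
      |x ^ α * iteratedDerivWithin β (mconv f g) (Ioi 0) x| ≤ M := by
  induction β generalizing f g with
  | zero => simpa using mconv_bound hf.decay hg α
  | succ β ih =>
    obtain ⟨M, hM⟩ := ih hf.derivWithin hg.inv_mul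
    refine ⟨M, fun x hx => ?_⟩
    rw [iteratedDerivWithin_succ', iteratedDerivWithin_congr (derivWithin_mconv hf hg) hx]
    exact hM x hx

theorem mellin_convolution_mem_schwartz
    (f g : ℝ → ℝ) (hf : MellinSchwartz f) (hg : MellinSchwartz g) :
    MellinSchwartz (mconv f g) :=
  ⟨contDiffOn_infty.2 fun n => contDiffOn_mconv n hf hg.decay,
    fun α β => iteratedDerivWithin_mconv_bound α β hf hg.decay⟩
end

section
/- Let m : 𝒮(ℝ₊) → ℝ be a linear functional which is nonzero, multiplicative with respect to the Mellin convolution (m(f⋆g) = m(f)·m(g) for all f, g ∈ 𝒮(ℝ₊)), and sequentially continuous with respect to the seminorms p_{α,β} (i.e. m(f_n) → m(f) whenever p_{α,β}(f_n − f) → 0 for all α ∈ ℤ, β ∈ ℕ). Then there exists a unique s ∈ ℝ such that m(f) = ∫₀^∞ x^{s−1} f(x) dx for every f ∈ 𝒮(ℝ₊). -/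
/-!
Write `M_s f = ∫₀^∞ x ^ (s - 1) f x dx` and let `D = x d/dx` be the Euler operator (`euler`).
Integration by parts gives `(D f) ⋆ g = f ⋆ (D g)` (`mconv_euler`), so multiplicativity yields
`m (D f) * m g = m f * m (D g)`. As `m` is nonzero, there is `s` with `m (D g) = -s * m g` for all
Schwartz `g`; that is, `m` vanishes on the range of `D + s`.

This range contains the kernel of `M_s`: if `M_s f = 0`, then
`h x = x ^ (-s) ∫₀ˣ y ^ (s - 1) f y dy` is again Schwartz and `(D + s) h = f` (`exists_euler_eq`). Hence `m = c * M_s` for a constant `c`.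
Evaluating both sides on `φ ⋆ φ`, where `M_s φ = M_s (φ ⋆ φ) = 1` (`exists_test`), gives
`c ^ 2 = c`, and `c ≠ 0` because `m ≠ 0`. Uniqueness of `s` follows from `M_t (D f) = -t * M_t f`
(`mellin_euler`) at any `f` with `m f ≠ 0`.

Continuity of `m` enters only through `functional_congr`: the value of `m` does not depend on the
values of a function off `(0,∞)`.
-/

open MeasureTheory Set Filter

/-! ### Rapidly decaying functions on the half-line -/

/-- Rapid decay at both ends of `(0,∞)`: `f` is dominated there by every real power of `x`. -/
def RapidDecay (f : ℝ → ℝ) : Prop :=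
  ∀ r : ℝ, ∃ M : ℝ, ∀ x : ℝ, 0 < x → |f x| ≤ M * x ^ r

/-- Integer exponents suffice, since `min (x ^ k) (x ^ (k + 1)) ≤ x ^ r` for `k ≤ r ≤ k + 1`. -/
lemma rapidDecay_of_int {f : ℝ → ℝ}
    (h : ∀ α : ℤ, ∃ M : ℝ, ∀ x ∈ Set.Ioi (0:ℝ), |x ^ α * f x| ≤ M) : RapidDecay f := by
  have key : ∀ k : ℤ, ∃ M : ℝ, 0 ≤ M ∧ ∀ x : ℝ, 0 < x → |f x| ≤ M * x ^ (k : ℝ) := by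
    intro k
    obtain ⟨M, hM⟩ := h (-k)
    refine ⟨M, (abs_nonneg _).trans (hM 1 (by simp)), fun x hx => ?_⟩
    have h1 := hM x hx
    have hp : 0 < x ^ k := zpow_pos hx k
    rw [abs_mul, zpow_neg, abs_of_pos (inv_pos.2 hp), inv_mul_le_iff₀ hp] at h1
    rw [Real.rpow_intCast]
    linarith
  intro r
  obtain ⟨M₁, h₁, hM₁⟩ := key ⌊r⌋
  obtain ⟨M₂, h₂, hM₂⟩ := key (⌊r⌋ + 1)
  refine ⟨M₁ + M₂, fun x hx => ?_⟩
  have hr : 0 < x ^ r := Real.rpow_pos_of_pos hx r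
  rcases le_total 1 x with h1 | h1
  · have := Real.rpow_le_rpow_of_exponent_le h1 (Int.floor_le r)
    nlinarith [hM₁ x hx, mul_le_mul_of_nonneg_left this h₁, mul_nonneg h₂ hr.le]
  · have := Real.rpow_le_rpow_of_exponent_ge hx h1
      (show r ≤ ((⌊r⌋ + 1 : ℤ) : ℝ) by push_cast; exact (Int.lt_floor_add_one r).le)
    nlinarith [hM₂ x hx, mul_le_mul_of_nonneg_left this h₂, mul_nonneg h₁ hr.le]

namespace RapidDecay

lemma int_bound {f : ℝ → ℝ} (h : RapidDecay f) (α : ℤ) :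
    ∃ M : ℝ, ∀ x ∈ Set.Ioi (0:ℝ), |x ^ α * f x| ≤ M := by
  obtain ⟨M, hM⟩ := h (-α : ℤ)
  refine ⟨M, fun x hx => ?_⟩
  have h1 := hM x hx
  have hp : 0 < x ^ α := zpow_pos hx α
  rw [Real.rpow_intCast, zpow_neg, ← div_eq_mul_inv, le_div_iff₀ hp] at h1
  rw [abs_mul, abs_of_pos hp]
  linarith

lemma congr {f g : ℝ → ℝ} (h : RapidDecay f) (hfg : ∀ x : ℝ, 0 < x → f x = g x) :
    RapidDecay g := by
  intro r
  obtain ⟨M, hM⟩ := h r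
  exact ⟨M, fun x hx => by rw [← hfg x hx]; exact hM x hx⟩

lemma add {f g : ℝ → ℝ} (hf : RapidDecay f) (hg : RapidDecay g) :
    RapidDecay (fun x => f x + g x) := by
  intro r
  obtain ⟨M, hM⟩ := hf r
  obtain ⟨N, hN⟩ := hg r
  refine ⟨M + N, fun x hx => (abs_add_le _ _).trans ?_⟩
  linarith [hM x hx, hN x hx]

lemma bdd_mul {b f : ℝ → ℝ} (hf : RapidDecay f) {C : ℝ} (hb : ∀ x : ℝ, 0 < x → |b x| ≤ C) :
    RapidDecay (fun x => b x * f x) := by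
  intro r
  obtain ⟨M, hM⟩ := hf r
  refine ⟨C * M, fun x hx => ?_⟩
  rw [abs_mul, mul_assoc]
  exact mul_le_mul (hb x hx) (hM x hx) (abs_nonneg _) ((abs_nonneg _).trans (hb x hx))

lemma rpow_mul {f : ℝ → ℝ} (hf : RapidDecay f) (p : ℝ) :
    RapidDecay (fun x => x ^ p * f x) := by
  intro r
  obtain ⟨M, hM⟩ := hf (r - p)
  refine ⟨M, fun x hx => ?_⟩
  have hp : 0 < x ^ p := Real.rpow_pos_of_pos hx p
  have h1 := hM x hx
  rw [Real.rpow_sub hx, ← mul_div_assoc, le_div_iff₀ hp] at h1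
  rw [abs_mul, abs_of_pos hp]
  linarith

lemma bounded {f : ℝ → ℝ} (hf : RapidDecay f) : ∃ C : ℝ, ∀ x : ℝ, 0 < x → |f x| ≤ C := by
  obtain ⟨M, hM⟩ := hf 0
  exact ⟨M, fun x hx => by simpa using hM x hx⟩

lemma tendsto_zero {f : ℝ → ℝ} (hf : RapidDecay f) :
    Tendsto f (nhdsWithin 0 (Ioi 0)) (nhds 0) := by
  obtain ⟨M, hM⟩ := hf 1
  refine squeeze_zero_norm' (a := fun x => M * x) ?_ ?_
  · filter_upwards [self_mem_nhdsWithin] with x hx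
    simpa using hM x hx
  · have : Tendsto (fun x : ℝ => M * x) (nhds 0) (nhds (M * 0)) :=
      (continuous_const.mul continuous_id).tendsto 0
    rw [mul_zero] at this
    exact this.mono_left nhdsWithin_le_nhds

lemma tendsto_atTop {f : ℝ → ℝ} (hf : RapidDecay f) :
    Tendsto f atTop (nhds 0) := by
  obtain ⟨M, hM⟩ := hf (-1)
  refine squeeze_zero_norm' (a := fun x => M * x⁻¹) ?_ ?_
  · filter_upwards [eventually_gt_atTop 0] with x hx
    simpa [Real.rpow_neg_one] using hM x hx
  · simpa using tendsto_inv_atTop_zero.const_mul M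

lemma integrableOn {f : ℝ → ℝ} (hf : RapidDecay f) (hc : ContinuousOn f (Ioi 0)) :
    IntegrableOn f (Ioi 0) := by
  obtain ⟨M, hM⟩ := hf 0
  obtain ⟨N, hN⟩ := hf (-2)
  refine Integrable.mono' (g := fun x => (M + N) * (1 + x ^ 2)⁻¹)
    (integrable_inv_one_add_sq.const_mul _).integrableOn
    (hc.aestronglyMeasurable measurableSet_Ioi) ?_
  refine (ae_restrict_iff' measurableSet_Ioi).2 (Eventually.of_forall fun x hx => ?_)
  have hx' : (0:ℝ) < x := hx
  have h1 := hM x hx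
  have h2 := hN x hx
  rw [Real.rpow_zero, mul_one] at h1
  rw [Real.rpow_neg hx'.le, Real.rpow_two, ← div_eq_mul_inv, le_div_iff₀ (by positivity)] at h2
  rw [Real.norm_eq_abs, ← div_eq_mul_inv, le_div_iff₀ (by positivity)]
  linarith

/-- An exact derivative of a rapidly decaying function has integral zero. -/
lemma integral_deriv_eq_zero {F F' : ℝ → ℝ} (hF : RapidDecay F)
    (hd : ∀ x : ℝ, 0 < x → HasDerivAt F (F' x) x) (hi : IntegrableOn F' (Ioi 0)) :
    ∫ x in Ioi (0:ℝ), F' x = 0 := by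
  have h := integral_Ioi_of_hasDerivAt_of_tendsto (f := (Ioi (0:ℝ)).indicator F) (f' := F')
    (a := 0) (m := 0) ?_ ?_ hi ?_
  · simpa using h
  · rw [← Ioi_insert, continuousWithinAt_insert_self]
    simp only [ContinuousWithinAt, indicator_apply, mem_Ioi, lt_irrefl, if_false]
    refine hF.tendsto_zero.congr' ?_
    filter_upwards [self_mem_nhdsWithin] with x hx
    exact (indicator_of_mem hx F).symm
  · intro x hx
    refine (hd x hx).congr_of_eventuallyEq ?_
    filter_upwards [Ioi_mem_nhds hx] with y hy
    exact indicator_of_mem hy F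
  · refine hF.tendsto_atTop.congr' ?_
    filter_upwards [eventually_gt_atTop 0] with x hx
    exact (indicator_of_mem (by exact hx) F).symm

end RapidDecay

/-! ### The Schwartz class by successive derivatives -/

/-- `f` has `n` derivatives on `(0,∞)`, the last one continuous, and all of them, `f` included,
decay rapidly. The derivative is given by a witness, which may be arbitrary off `(0,∞)`. -/
def DecayDiff : ℕ → (ℝ → ℝ) → Prop
  | 0, f => RapidDecay f ∧ ContinuousOn f (Ioi 0)
  | n + 1, f => RapidDecay f ∧
      ∃ f' : ℝ → ℝ, (∀ x : ℝ, 0 < x → HasDerivAt f (f' x) x) ∧ DecayDiff n f'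

namespace DecayDiff

lemma rapidDecay {n : ℕ} {f : ℝ → ℝ} (h : DecayDiff n f) : RapidDecay f := by
  cases n <;> exact h.1

lemma of_succ : ∀ {n : ℕ} {f : ℝ → ℝ}, DecayDiff (n + 1) f → DecayDiff n f
  | 0, _, ⟨h, _, hd, _⟩ => ⟨h, fun x hx => (hd x hx).continuousAt.continuousWithinAt⟩
  | _ + 1, _, ⟨h, f', hd, h'⟩ => ⟨h, f', hd, of_succ h'⟩

lemma congr {n : ℕ} {f g : ℝ → ℝ} (h : DecayDiff n f) (hfg : ∀ x : ℝ, 0 < x → f x = g x) :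
    DecayDiff n g := by
  cases n with
  | zero => exact ⟨h.1.congr hfg, h.2.congr fun x hx => (hfg x hx).symm⟩
  | succ n =>
    obtain ⟨h, f', hd, h'⟩ := h
    refine ⟨h.congr hfg, f', fun x hx => (hd x hx).congr_of_eventuallyEq ?_, h'⟩
    filter_upwards [Ioi_mem_nhds hx] with y hy
    exact (hfg y hy).symm

lemma add {n : ℕ} : ∀ {f g : ℝ → ℝ}, DecayDiff n f → DecayDiff n g →
    DecayDiff n (fun x => f x + g x) := by
  induction n with
  | zero => exact fun hf hg => ⟨hf.1.add hg.1, hf.2.add hg.2⟩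
  | succ n ih =>
    rintro f g ⟨hf, f', hdf, hf'⟩ ⟨hg, g', hdg, hg'⟩
    exact ⟨hf.add hg, _, fun x hx => (hdf x hx).add (hdg x hx), ih hf' hg'⟩

lemma const_mul {n : ℕ} (c : ℝ) : ∀ {f : ℝ → ℝ}, DecayDiff n f →
    DecayDiff n (fun x => c * f x) := by
  induction n with
  | zero =>
    exact fun hf => ⟨hf.1.bdd_mul (b := fun _ => c) fun _ _ => le_rfl, hf.2.const_smul c⟩
  | succ n ih =>
    rintro f ⟨hf, f', hdf, hf'⟩
    exact ⟨hf.bdd_mul (b := fun _ => c) fun _ _ => le_rfl, _,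
      fun x hx => (hdf x hx).const_mul c, ih hf'⟩

lemma rpow_mul {n : ℕ} : ∀ (p : ℝ) {f : ℝ → ℝ}, DecayDiff n f →
    DecayDiff n (fun x => x ^ p * f x) := by
  induction n with
  | zero =>
    exact fun p f hf => ⟨hf.1.rpow_mul p,
      (continuousOn_id.rpow_const fun x hx => Or.inl (ne_of_gt hx)).mul hf.2⟩
  | succ n ih =>
    intro p f hf
    obtain ⟨h, f', hdf, hf'⟩ := id hf
    refine ⟨h.rpow_mul p, fun x => p * (x ^ (p - 1) * f x) + x ^ p * f' x, fun x hx => ?_,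
      ((ih (p - 1) hf.of_succ).const_mul p).add (ih p hf')⟩
    have := (Real.hasDerivAt_rpow_const (x := x) (p := p) (Or.inl hx.ne')).mul (hdf x hx)
    rwa [mul_assoc] at this

lemma contDiffOn {n : ℕ} : ∀ {f : ℝ → ℝ}, DecayDiff n f → ContDiffOn ℝ n f (Ioi 0) := by
  induction n with
  | zero => exact fun hf => contDiffOn_zero.2 hf.2
  | succ n ih =>
    rintro f ⟨hf, f', hdf, hf'⟩
    push_cast
    rw [contDiffOn_succ_iff_derivWithin (uniqueDiffOn_Ioi 0)]
    refine ⟨fun x hx => (hdf x hx).differentiableAt.differentiableWithinAt, by simp,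
      (ih hf').congr fun x hx => ?_⟩
    rw [derivWithin_of_isOpen isOpen_Ioi hx, (hdf x hx).deriv]

lemma iteratedDerivWithin_rapidDecay {n : ℕ} : ∀ {f : ℝ → ℝ}, DecayDiff n f →
    RapidDecay (iteratedDerivWithin n f (Ioi 0)) := by
  induction n with
  | zero => exact fun hf => by simpa using hf.1
  | succ n ih =>
    rintro f ⟨hf, f', hdf, hf'⟩
    refine (ih hf').congr fun x hx => ?_
    rw [iteratedDerivWithin_succ']
    refine iteratedDerivWithin_congr (fun y hy => ?_) hx
    rw [derivWithin_of_isOpen isOpen_Ioi hy, (hdf y hy).deriv]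

end DecayDiff

lemma mellinSchwartz_iff {f : ℝ → ℝ} : MellinSchwartz f ↔ ∀ n, DecayDiff n f := by
  constructor
  · rintro ⟨hs, hb⟩
    have key : ∀ n k : ℕ, DecayDiff n (iteratedDerivWithin k f (Ioi 0)) := by
      intro n
      induction n with
      | zero =>
        exact fun k => ⟨rapidDecay_of_int fun α => hb α k,
          hs.continuousOn_iteratedDerivWithin (by exact_mod_cast le_top) (uniqueDiffOn_Ioi 0)⟩
      | succ n ih =>
        refine fun k => ⟨rapidDecay_of_int fun α => hb α k,
          iteratedDerivWithin (k + 1) f (Ioi 0), fun x hx => ?_, ih (k + 1)⟩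
        have hd := hs.differentiableOn_iteratedDerivWithin (m := k)
          (by exact_mod_cast WithTop.coe_lt_top k) (uniqueDiffOn_Ioi 0)
        rw [iteratedDerivWithin_succ, derivWithin_of_isOpen isOpen_Ioi hx]
        exact ((hd x hx).differentiableAt (Ioi_mem_nhds hx)).hasDerivAt
    intro n
    simpa using key n 0
  · intro h
    exact ⟨contDiffOn_infty.2 fun n => (h n).contDiffOn,
      fun α β => (h β).iteratedDerivWithin_rapidDecay.int_bound α⟩

namespace MellinSchwartz

lemma rapidDecay {f : ℝ → ℝ} (h : MellinSchwartz f) : RapidDecay f :=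
  (mellinSchwartz_iff.1 h 0).1

lemma continuousOn {f : ℝ → ℝ} (h : MellinSchwartz f) : ContinuousOn f (Ioi 0) :=
  (mellinSchwartz_iff.1 h 0).2

lemma congr {f g : ℝ → ℝ} (h : MellinSchwartz f) (hfg : ∀ x : ℝ, 0 < x → f x = g x) :
    MellinSchwartz g :=
  mellinSchwartz_iff.2 fun n => (mellinSchwartz_iff.1 h n).congr hfg

lemma add {f g : ℝ → ℝ} (hf : MellinSchwartz f) (hg : MellinSchwartz g) :
    MellinSchwartz (fun x => f x + g x) :=
  mellinSchwartz_iff.2 fun n => (mellinSchwartz_iff.1 hf n).add (mellinSchwartz_iff.1 hg n)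

lemma const_mul {f : ℝ → ℝ} (c : ℝ) (hf : MellinSchwartz f) :
    MellinSchwartz (fun x => c * f x) :=
  mellinSchwartz_iff.2 fun n => (mellinSchwartz_iff.1 hf n).const_mul c

lemma rpow_mul {f : ℝ → ℝ} (p : ℝ) (hf : MellinSchwartz f) :
    MellinSchwartz (fun x => x ^ p * f x) :=
  mellinSchwartz_iff.2 fun n => (mellinSchwartz_iff.1 hf n).rpow_mul p

lemma hasDerivAt {f : ℝ → ℝ} (h : MellinSchwartz f) {x : ℝ} (hx : 0 < x) :
    HasDerivAt f (deriv f x) x := by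
  obtain ⟨_, f', hd, _⟩ := mellinSchwartz_iff.1 h 1
  exact (hd x hx).differentiableAt.hasDerivAt

lemma deriv_mem {f : ℝ → ℝ} (h : MellinSchwartz f) : MellinSchwartz (deriv f) := by
  refine mellinSchwartz_iff.2 fun n => ?_
  obtain ⟨_, f', hd, h'⟩ := mellinSchwartz_iff.1 h (n + 1)
  exact h'.congr fun x hx => (hd x hx).deriv.symm

lemma integrableOn {f : ℝ → ℝ} (h : MellinSchwartz f) : IntegrableOn f (Ioi 0) :=
  h.rapidDecay.integrableOn h.continuousOn

end MellinSchwartz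

/-! ### The Euler operator -/

/-- The Euler operator `x d/dx`, set to zero off `(0,∞)` so that convolutions of its values are
controlled at every real argument. -/
noncomputable def euler (f : ℝ → ℝ) : ℝ → ℝ :=
  (Ioi (0:ℝ)).indicator fun x => x * deriv f x

lemma euler_apply (f : ℝ → ℝ) {x : ℝ} (hx : 0 < x) : euler f x = x * deriv f x :=
  indicator_of_mem (by exact hx) _

lemma MellinSchwartz.euler_mem {f : ℝ → ℝ} (hf : MellinSchwartz f) : MellinSchwartz (euler f) := by
  refine (hf.deriv_mem.rpow_mul 1).congr fun x hx => ?_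
  rw [euler_apply f hx, Real.rpow_one]

/-- The Euler operator moves freely between the factors of a Mellin convolution; this is an
integration by parts. Truncating `f` makes both sides vanish at arguments `x ≤ 0`, so the two
functions agree on all of `ℝ`. -/
lemma mconv_euler {f g : ℝ → ℝ} (hf : MellinSchwartz f) (hg : MellinSchwartz g) :
    mconv (euler f) g = mconv ((Ioi (0:ℝ)).indicator f) (euler g) := by
  funext x
  unfold mconv
  rcases le_or_gt x 0 with hx | hx
  · have hneg : ∀ y ∈ Ioi (0:ℝ), x * y⁻¹ ∉ Ioi (0:ℝ) := fun y hy => by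
      simpa using mul_nonpos_of_nonpos_of_nonneg hx (inv_nonneg.2 (le_of_lt hy))
    rw [setIntegral_eq_zero_of_forall_eq_zero, setIntegral_eq_zero_of_forall_eq_zero]
    · intro y hy
      rw [indicator_of_notMem (hneg y hy)]
      simp
    · intro y hy
      rw [euler, indicator_of_notMem (hneg y hy)]
      simp
  · have hpos : ∀ {y : ℝ}, 0 < y → 0 < x * y⁻¹ := fun hy => mul_pos hx (inv_pos.2 hy)
    have hinv : ContinuousOn (fun y : ℝ => x * y⁻¹) (Ioi 0) :=
      continuousOn_const.mul (continuousOn_inv₀.mono fun y hy => ne_of_gt hy)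
    have hcomp : ∀ {k : ℝ → ℝ}, MellinSchwartz k →
        ContinuousOn (fun y : ℝ => k (x * y⁻¹)) (Ioi 0) := fun hk =>
      hk.continuousOn.comp hinv fun y hy => hpos hy
    obtain ⟨C, hC⟩ := hf.rapidDecay.bounded
    obtain ⟨C', hC'⟩ := hf.deriv_mem.rapidDecay.bounded
    have hB : MellinSchwartz fun y => x * (y ^ (-2 : ℝ) * g y) := (hg.rpow_mul (-2)).const_mul x
    have iA : IntegrableOn (fun y => f (x * y⁻¹) * deriv g y) (Ioi 0) :=
      (hg.deriv_mem.rapidDecay.bdd_mul (b := fun y => f (x * y⁻¹))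
        fun y hy => hC _ (hpos hy)).integrableOn ((hcomp hf).mul hg.deriv_mem.continuousOn)
    have iB : IntegrableOn (fun y => deriv f (x * y⁻¹) * (x * (y ^ (-2 : ℝ) * g y))) (Ioi 0) :=
      (hB.rapidDecay.bdd_mul (b := fun y => deriv f (x * y⁻¹))
        fun y hy => hC' _ (hpos hy)).integrableOn ((hcomp hf.deriv_mem).mul hB.continuousOn)
    have hF : RapidDecay fun y => f (x * y⁻¹) * g y :=
      hg.rapidDecay.bdd_mul (b := fun y => f (x * y⁻¹)) fun y hy => hC _ (hpos hy)
    have key := hF.integral_deriv_eq_zero (F' := fun y =>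
      f (x * y⁻¹) * deriv g y - deriv f (x * y⁻¹) * (x * (y ^ (-2 : ℝ) * g y))) ?_ (iA.sub iB)
    · rw [integral_sub iA iB, sub_eq_zero] at key
      refine Eq.trans ?_ (key.symm.trans ?_)
      · refine setIntegral_congr_fun measurableSet_Ioi fun y hy => ?_
        have hy' : (0:ℝ) < y := hy
        rw [euler_apply f (hpos hy'), Real.rpow_neg hy'.le, Real.rpow_two]
        field_simp
      · refine setIntegral_congr_fun measurableSet_Ioi fun y hy => ?_
        have hy' : (0:ℝ) < y := hy
        rw [euler_apply g hy', indicator_of_mem (by exact hpos hy')]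
        field_simp
    · intro y hy
      have h1 : HasDerivAt (fun y : ℝ => x * y⁻¹) (x * -(y ^ 2)⁻¹) y :=
        (hasDerivAt_inv hy.ne').const_mul x
      have h2 := ((hf.hasDerivAt (hpos hy)).comp y h1).mul (hg.hasDerivAt hy)
      refine h2.congr_deriv ?_
      rw [Real.rpow_neg hy.le, Real.rpow_two]
      simp only [Function.comp]
      ring

/-- On the Mellin side the Euler operator is multiplication by `-s`. -/
lemma mellin_euler {f : ℝ → ℝ} (hf : MellinSchwartz f) (s : ℝ) :
    ∫ x in Ioi (0:ℝ), x ^ (s - 1) * euler f x =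
      -s * ∫ x in Ioi (0:ℝ), x ^ (s - 1) * f x := by
  have i1 := (hf.euler_mem.rpow_mul (s - 1)).integrableOn
  have i2 := (hf.rpow_mul (s - 1)).integrableOn
  have key := (hf.rpow_mul s).rapidDecay.integral_deriv_eq_zero (F' := fun x =>
    x ^ (s - 1) * euler f x + s * (x ^ (s - 1) * f x)) ?_ (i1.add (i2.const_mul s))
  · rw [integral_add i1 (i2.const_mul s), integral_const_mul] at key
    linarith
  · intro x hx
    have h := (Real.hasDerivAt_rpow_const (x := x) (p := s) (Or.inl hx.ne')).mul (hf.hasDerivAt hx)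
    refine h.congr_deriv ?_
    rw [euler_apply f hx, Real.rpow_sub_one hx.ne']
    field_simp
    ring

/-- A Schwartz function of integral zero has a Schwartz primitive: the primitive vanishing at `0`
also decays at infinity, where it equals minus the tail integral. -/
lemma exists_primitive {F : ℝ → ℝ} (hF : MellinSchwartz F) (h0 : ∫ x in Ioi (0:ℝ), F x = 0) :
    ∃ G : ℝ → ℝ, MellinSchwartz G ∧ ∀ x : ℝ, 0 < x → HasDerivAt G (F x) x := by
  have hi := hF.integrableOn
  have hd : ∀ x : ℝ, 0 < x → HasDerivAt (fun u => ∫ y in (0:ℝ)..u, F y) (F x) x := by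
    intro x hx
    refine intervalIntegral.integral_hasDerivAt_right ?_ ?_
      (hF.continuousOn.continuousAt (Ioi_mem_nhds hx))
    · rw [intervalIntegrable_iff_integrableOn_Ioc_of_le hx.le]
      exact hi.mono_set Ioc_subset_Ioi_self
    · exact hF.continuousOn.stronglyMeasurableAtFilter isOpen_Ioi x hx
  have key : ∀ q : ℝ, q ≠ 0 → ∃ M : ℝ, ∀ x : ℝ, 0 < x →
      |∫ y in (0:ℝ)..x, F y| ≤ M * x ^ q := by
    intro q hq
    obtain ⟨M, hM⟩ := hF.rapidDecay (q - 1)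
    rcases lt_or_gt_of_ne hq with hq | hq
    · refine ⟨M * (-1 / q), fun x hx => ?_⟩
      have hsplit : (∫ y in (0:ℝ)..x, F y) = -∫ y in Ioi x, F y := by
        have hu := setIntegral_union (Ioc_disjoint_Ioi le_rfl) measurableSet_Ioi
          (hi.mono_set (Ioc_subset_Ioi_self : Ioc 0 x ⊆ Ioi 0)) (hi.mono_set (Ioi_subset_Ioi hx.le))
        rw [Ioc_union_Ioi_eq_Ioi hx.le, h0] at hu
        rw [intervalIntegral.integral_of_le hx.le]
        linarith
      rw [hsplit, abs_neg]
      have h1 := norm_integral_le_of_norm_le (μ := volume.restrict (Ioi x)) (f := F)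
        (g := fun y => M * y ^ (q - 1))
        ((integrableOn_Ioi_rpow_of_lt (by linarith) hx).const_mul M)
        ((ae_restrict_iff' measurableSet_Ioi).2
          (Eventually.of_forall fun y hy => hM y (hx.trans hy)))
      rw [integral_const_mul, integral_Ioi_rpow_of_lt (by linarith) hx, sub_add_cancel] at h1
      refine h1.trans (le_of_eq ?_)
      ring
    · refine ⟨M / q, fun x hx => ?_⟩
      have h1 := intervalIntegral.norm_integral_le_of_norm_le hx.le (f := F)
        (g := fun y => M * y ^ (q - 1)) (μ := volume)
        (Eventually.of_forall fun y hy => hM y hy.1)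
        ((intervalIntegral.intervalIntegrable_rpow' (by linarith)).const_mul M)
      rw [intervalIntegral.integral_const_mul, integral_rpow (Or.inl (by linarith)),
        sub_add_cancel, Real.zero_rpow hq.ne', sub_zero] at h1
      refine h1.trans (le_of_eq ?_)
      ring
  refine ⟨_, mellinSchwartz_iff.2 fun n => DecayDiff.of_succ
    ⟨rapidDecay_of_int fun α => ?_, F, hd, mellinSchwartz_iff.1 hF n⟩, hd⟩
  -- The estimates above miss the exponent zero, which interpolates the exponents `1` and `-1`.
  have key' : ∃ M : ℝ, ∀ x : ℝ, 0 < x →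
      |∫ y in (0:ℝ)..x, F y| ≤ M * x ^ ((-α : ℤ) : ℝ) := by
    by_cases hα : α = 0
    · obtain ⟨M, hM⟩ := key 1 (by norm_num)
      obtain ⟨N, hN⟩ := key (-1) (by norm_num)
      refine ⟨max M N, fun x hx => ?_⟩
      have h1 := hM x hx
      have h2 := hN x hx
      rw [Real.rpow_one] at h1
      rw [Real.rpow_neg_one, ← div_eq_mul_inv, le_div_iff₀ hx] at h2
      simp only [hα, neg_zero, Int.cast_zero, Real.rpow_zero, mul_one]
      rcases le_total x 1 with h | h
      · refine le_trans ?_ (le_max_left M N)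
        nlinarith [abs_nonneg (∫ y in (0:ℝ)..x, F y)]
      · refine le_trans ?_ (le_max_right M N)
        nlinarith [abs_nonneg (∫ y in (0:ℝ)..x, F y)]
    · exact key _ (by exact_mod_cast neg_ne_zero.2 hα)
  obtain ⟨M, hM⟩ := key'
  refine ⟨M, fun x hx => ?_⟩
  have hp : 0 < x ^ α := zpow_pos hx α
  have h1 := hM x hx
  rw [Real.rpow_intCast, zpow_neg, ← div_eq_mul_inv, le_div_iff₀ hp] at h1
  rw [abs_mul, abs_of_pos hp]
  linarith

/-- The kernel of the Mellin transform at `s` lies in the range of `x d/dx + s`, with inverse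
`f ↦ x ^ (-s) ∫₀ˣ y ^ (s - 1) f y dy`. -/
lemma exists_euler_eq {f : ℝ → ℝ} (hf : MellinSchwartz f) (s : ℝ)
    (h0 : ∫ x in Ioi (0:ℝ), x ^ (s - 1) * f x = 0) :
    ∃ h : ℝ → ℝ, MellinSchwartz h ∧ ∀ x : ℝ, 0 < x → euler h x + s * h x = f x := by
  obtain ⟨G, hG, hd⟩ := exists_primitive (hf.rpow_mul (s - 1)) h0
  refine ⟨fun x => x ^ (-s) * G x, hG.rpow_mul (-s), fun x hx => ?_⟩
  have h := (Real.hasDerivAt_rpow_const (x := x) (p := -s) (Or.inl hx.ne')).mul (hd x hx)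
  have hs : 0 < x ^ s := Real.rpow_pos_of_pos hx s
  have h' : deriv (fun x => x ^ (-s) * G x) x = _ := h.deriv
  rw [euler_apply _ hx, h', Real.rpow_sub_one hx.ne', Real.rpow_sub_one hx.ne']
  simp only [Real.rpow_neg hx.le]
  field_simp
  ring

/-! ### A test function -/

lemma MellinSchwartz.of_comp_log {φ : ℝ → ℝ} (hφ : ContDiff ℝ (⊤ : ℕ∞) φ)
    (hc : HasCompactSupport φ) : MellinSchwartz fun x => φ (Real.log x) := by
  have rd : ∀ ψ : ℝ → ℝ, Continuous ψ → HasCompactSupport ψ →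
      RapidDecay fun x => ψ (Real.log x) := by
    intro ψ hψ hcψ r
    obtain ⟨C, hC⟩ :=
      (hcψ.mul_right (f' := fun u => Real.exp (-(u * r)))).exists_bound_of_continuous
        (hψ.mul (by fun_prop))
    refine ⟨C, fun x hx => ?_⟩
    have h := hC (Real.log x)
    rw [Real.rpow_def_of_pos hx]
    simp only [Pi.mul_apply, norm_mul, Real.norm_eq_abs, Real.abs_exp] at h
    rwa [Real.exp_neg, ← div_eq_mul_inv, div_le_iff₀ (Real.exp_pos _)] at h
  refine mellinSchwartz_iff.2 fun n => ?_
  induction n generalizing φ with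
  | zero =>
    exact ⟨rd φ hφ.continuous hc, hφ.continuous.comp_continuousOn
      (Real.continuousOn_log.mono fun x hx => ne_of_gt hx)⟩
  | succ n ih =>
    have hφ' := contDiff_infty_iff_deriv.1 hφ
    refine ⟨rd φ hφ.continuous hc, fun x => x ^ (-1 : ℝ) * deriv φ (Real.log x), fun x hx => ?_,
      (ih hφ'.2 hc.deriv).rpow_mul (-1)⟩
    have h := (hφ'.1 (Real.log x)).hasDerivAt.comp x (Real.hasDerivAt_log hx.ne')
    refine h.congr_deriv ?_
    simp only [Real.rpow_neg_one, mul_comm]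

lemma integral_Ioi_eq_integral_exp (G : ℝ → ℝ) :
    ∫ y in Ioi (0:ℝ), G y = ∫ v : ℝ, Real.exp v * G (Real.exp v) := by
  have h := integral_image_eq_integral_abs_deriv_smul (s := univ) (f := Real.exp) (f' := Real.exp)
    MeasurableSet.univ (fun x _ => (Real.hasDerivAt_exp x).hasDerivWithinAt)
    Real.exp_injective.injOn G
  rw [image_univ, Real.range_exp] at h
  simpa using h

lemma mellin_twist_comp_log (φ : ℝ → ℝ) (s : ℝ) :
    ∫ x in Ioi (0:ℝ), x ^ (s - 1) * (x ^ (-s) * φ (Real.log x)) = ∫ v, φ v := by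
  rw [integral_Ioi_eq_integral_exp]
  refine integral_congr_ae (Eventually.of_forall fun v => ?_)
  simp only [Real.log_exp]
  have : Real.exp v * (Real.exp v ^ (s - 1) * Real.exp v ^ (-s)) = 1 := by
    rw [← Real.rpow_add (Real.exp_pos v), show s - 1 + -s = -1 by ring, Real.rpow_neg_one]
    exact mul_inv_cancel₀ (Real.exp_pos v).ne'
  rw [← mul_assoc, mul_assoc, ← mul_assoc (_ ^ _), ← mul_assoc, this, one_mul]

/-- In logarithmic coordinates a bump of mass one, twisted by `x ^ (-s)`: its Mellin convolution
square is the twisted ordinary convolution square, again a compactly supported smooth function of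
`log x` of mass one. -/
lemma exists_test (s : ℝ) : ∃ f : ℝ → ℝ, MellinSchwartz f ∧
    ∫ x in Ioi (0:ℝ), x ^ (s - 1) * f x = 1 ∧ MellinSchwartz (mconv f f) ∧
    ∫ x in Ioi (0:ℝ), x ^ (s - 1) * mconv f f x = 1 := by
  let b : ContDiffBump (0:ℝ) := ⟨1, 2, by norm_num, by norm_num⟩
  set ψ : ℝ → ℝ := b.normed volume with hψ
  have sψ : ContDiff ℝ (⊤ : ℕ∞) ψ := b.contDiff_normed
  have cψ : HasCompactSupport ψ := b.hasCompactSupport_normed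
  have oneψ : ∫ v, ψ v = 1 := b.integral_normed
  set L := ContinuousLinearMap.mul ℝ ℝ
  set χ : ℝ → ℝ := convolution ψ ψ L volume with hχ
  have sχ : ContDiff ℝ (⊤ : ℕ∞) χ :=
    cψ.contDiff_convolution_right L sψ.continuous.locallyIntegrable sψ
  have cχ : HasCompactSupport χ := cψ.convolution L cψ
  have iψ : Integrable ψ := sψ.continuous.integrable_of_hasCompactSupport cψ
  have oneχ : ∫ v, χ v = 1 := by
    rw [hχ, integral_convolution L iψ iψ, oneψ]
    simp [L]
  have conv : ∀ x : ℝ, 0 < x → x ^ (-s) * χ (Real.log x) =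
      mconv (fun x => x ^ (-s) * ψ (Real.log x)) (fun x => x ^ (-s) * ψ (Real.log x)) x := by
    intro x hx
    rw [mconv, integral_Ioi_eq_integral_exp, hχ, convolution_def, ← integral_const_mul]
    refine integral_congr_ae (Eventually.of_forall fun v => ?_)
    have hv := Real.exp_pos v
    simp only [L, ContinuousLinearMap.mul_apply']
    rw [Real.log_mul hx.ne' (inv_pos.2 hv).ne', Real.log_inv, Real.log_exp, ← sub_eq_add_neg,
      Real.mul_rpow hx.le (inv_pos.2 hv).le, Real.inv_rpow hv.le]
    have : 0 < Real.exp v ^ (-s) := Real.rpow_pos_of_pos hv _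
    field_simp
  refine ⟨fun x => x ^ (-s) * ψ (Real.log x), (MellinSchwartz.of_comp_log sψ cψ).rpow_mul (-s),
    (mellin_twist_comp_log ψ s).trans oneψ,
    ((MellinSchwartz.of_comp_log sχ cχ).rpow_mul (-s)).congr conv, ?_⟩
  refine Eq.trans ?_ ((mellin_twist_comp_log χ s).trans oneχ)
  refine setIntegral_congr_fun measurableSet_Ioi fun x hx => ?_
  rw [← conv x hx]

/-! ### The theorem -/

/-- The seminorms do not see values off `(0,∞)`, so neither does a continuous functional. -/
lemma functional_congr {m : (ℝ → ℝ) → ℝ}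
    (hcont : ∀ (fs : ℕ → ℝ → ℝ) (f : ℝ → ℝ), (∀ n, MellinSchwartz (fs n)) →
      MellinSchwartz f →
      (∀ (α : ℤ) (β : ℕ),
        Filter.Tendsto (fun n => pSemi α β (fun x => fs n x - f x)) Filter.atTop (nhds 0)) →
      Filter.Tendsto (fun n => m (fs n)) Filter.atTop (nhds (m f)))
    {f g : ℝ → ℝ} (hf : MellinSchwartz f) (hfg : ∀ x : ℝ, 0 < x → f x = g x) : m f = m g := by
  refine tendsto_nhds_unique tendsto_const_nhds
    (hcont (fun _ => f) g (fun _ => hf) (hf.congr hfg) fun α β => ?_)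
  have h0 : pSemi α β (fun x => f x - g x) = 0 := by
    have h : ∀ x : Ioi (0:ℝ), iteratedDerivWithin β (fun x => f x - g x) (Ioi 0) (x:ℝ) = 0 := by
      intro x
      rw [iteratedDerivWithin_congr (g := fun _ => (0:ℝ)) (s := Ioi 0)
        (fun y hy => sub_eq_zero.2 (hfg y hy)) x.2]
      simp
    simp only [pSemi, h, mul_zero, abs_zero, ciSup_const]
  simp only [h0]
  exact tendsto_const_nhds

theorem multiplicative_functional_is_mellin
    (m : (ℝ → ℝ) → ℝ)
    (hadd : ∀ f g : ℝ → ℝ, MellinSchwartz f → MellinSchwartz g →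
      m (fun x => f x + g x) = m f + m g)
    (hsmul : ∀ (c : ℝ) (f : ℝ → ℝ), MellinSchwartz f →
      m (fun x => c * f x) = c * m f)
    (hne : ∃ f : ℝ → ℝ, MellinSchwartz f ∧ m f ≠ 0)
    (hmul : ∀ f g : ℝ → ℝ, MellinSchwartz f → MellinSchwartz g →
      m (mconv f g) = m f * m g)
    (hcont : ∀ (fs : ℕ → ℝ → ℝ) (f : ℝ → ℝ), (∀ n, MellinSchwartz (fs n)) →
      MellinSchwartz f →
      (∀ (α : ℤ) (β : ℕ),
        Filter.Tendsto (fun n => pSemi α β (fun x => fs n x - f x)) Filter.atTop (nhds 0)) →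
      Filter.Tendsto (fun n => m (fs n)) Filter.atTop (nhds (m f))) :
    ∃! s : ℝ, ∀ f : ℝ → ℝ, MellinSchwartz f →
      m f = ∫ x in Set.Ioi (0:ℝ), x ^ (s - 1) * f x := by
  obtain ⟨f₀, hf₀, hm₀⟩ := hne
  have hswap : ∀ f g : ℝ → ℝ, MellinSchwartz f → MellinSchwartz g →
      m (euler f) * m g = m f * m (euler g) := by
    intro f g hf hg
    have hcut : ∀ x : ℝ, 0 < x → f x = (Ioi (0:ℝ)).indicator f x := fun x hx =>
      (indicator_of_mem (by exact hx) f).symm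
    rw [← hmul _ _ hf.euler_mem hg, mconv_euler hf hg, hmul _ _ (hf.congr hcut) hg.euler_mem,
      ← functional_congr hcont hf hcut]
  set s : ℝ := -(m (euler f₀) / m f₀) with hs
  have heuler : ∀ g : ℝ → ℝ, MellinSchwartz g → m (euler g) = -s * m g := by
    intro g hg
    have := hswap f₀ g hf₀ hg
    rw [hs]
    field_simp
    linarith
  have hker : ∀ f : ℝ → ℝ, MellinSchwartz f →
      ∫ x in Ioi (0:ℝ), x ^ (s - 1) * f x = 0 → m f = 0 := by
    intro f hf h0
    obtain ⟨h, hh, heq⟩ := exists_euler_eq hf s h0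
    rw [← functional_congr hcont (hh.euler_mem.add (hh.const_mul s)) heq,
      hadd _ _ hh.euler_mem (hh.const_mul s), hsmul s h hh, heuler h hh]
    ring
  obtain ⟨φ, hφ, hφ1, hφφ, hφφ1⟩ := exists_test s
  -- A functional vanishing on the kernel of the Mellin transform at `s` is a multiple of it.
  have hprop : ∀ f : ℝ → ℝ, MellinSchwartz f →
      m f = (∫ x in Ioi (0:ℝ), x ^ (s - 1) * f x) * m φ := by
    intro f hf
    set T := ∫ x in Ioi (0:ℝ), x ^ (s - 1) * f x with hT
    have h := hker _ (hf.add (hφ.const_mul (-T))) ?_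
    · rw [hadd _ _ hf (hφ.const_mul (-T)), hsmul _ _ hφ] at h
      linarith
    · have : ∀ x : ℝ, x ^ (s - 1) * (f x + -T * φ x) =
          x ^ (s - 1) * f x + -T * (x ^ (s - 1) * φ x) := fun x => by ring
      simp only [this]
      rw [integral_add (hf.rpow_mul (s - 1)).integrableOn
        ((hφ.rpow_mul (s - 1)).integrableOn.const_mul (-T)), integral_const_mul, hφ1, ← hT]
      ring
  have hmφ : m φ = 1 := by
    have h1 := hprop _ hφφ
    rw [hmul _ _ hφ hφ, hφφ1, one_mul] at h1
    have h2 : m φ ≠ 0 := fun h => hm₀ (by rw [hprop f₀ hf₀, h, mul_zero])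
    exact mul_left_cancel₀ h2 (by rw [h1, mul_one])
  refine ⟨s, fun f hf => by rw [hprop f hf, hmφ, mul_one], fun t ht => ?_⟩
  have h1 := ht _ hf₀.euler_mem
  rw [mellin_euler hf₀ t, ← ht f₀ hf₀, heuler f₀ hf₀] at h1
  have h2 := mul_right_cancel₀ hm₀ h1
  linarith
end
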